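/- arXiv:quant-ph/0409016 — 2 statements merged into one kernel-verified Lean document; each statement's English description precedes it below -/
import Mathlib

section
/- Let ρ be a density operator on ℂ^d with spectrum r, and ε₁ > 0. Let P_X(k) be the sum of Schur–Weyl projectors P_λ over partitions λ of k with Σ_i |λ_i/k − r_i| < ε₁. Then for every ε₂ > 0 there exists k₀ such that for all k ≥ k₀, tr(P_X(k) ρ^{⊗k}) > 1 − ε₂. -/
open Matrix Finset Nat ComplexOrder

noncomputable section

/-- The cells of the Young diagram of `lam` (rows indexed `0, …, d−1`). -/
def youngCells (d k : ℕ) (lam : ℕ → ℕ) : Finset (ℕ × ℕ) :=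
  (range d ×ˢ range k).filter fun c => c.2 < lam c.1

/-- The matrix of the action of the permutation `π ∈ S_k` on `(ℂ^d)^{⊗k}`, permuting
the tensor factors: basis vectors are indexed by functions `Fin k → Fin d`. -/
def permMat (d k : ℕ) (π : Equiv.Perm (Fin k)) :
    Matrix (Fin k → Fin d) (Fin k → Fin d) ℂ :=
  Matrix.of fun v w => if v = w ∘ ⇑π⁻¹ then 1 else 0

/-- The Young symmetry operator `e(T)` of a tableau, acting on `(ℂ^d)^{⊗k}`:
the signed sum over the column group times the sum over the row group, where the tableau is
given as a numbering `t : Fin k → ℕ × ℕ` of the boxes. -/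
def youngSymMat (d k : ℕ) (t : Fin k → ℕ × ℕ) :
    Matrix (Fin k → Fin d) (Fin k → Fin d) ℂ :=
  (∑ π ∈ univ.filter (fun π : Equiv.Perm (Fin k) => ∀ j, (t (π j)).2 = (t j).2),
      (((Equiv.Perm.sign π : ℤ) : ℂ) • permMat d k π)) *
    ∑ π ∈ univ.filter (fun π : Equiv.Perm (Fin k) => ∀ j, (t (π j)).1 = (t j).1),
      permMat d k π

/-- The `lam`-isotypic component `U_lam ⊗ V_lam` of `(ℂ^d)^{⊗k}` in the Schur–Weyl
decomposition: the span of the `S_k`-translates of the images of the Young symmetry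
operators of tableaux of shape `lam`. -/
def isotypic (d k : ℕ) (lam : ℕ → ℕ) : Submodule ℂ ((Fin k → Fin d) → ℂ) :=
  Submodule.span ℂ {x | ∃ t : Fin k → ℕ × ℕ,
    Set.BijOn t Set.univ ↑(youngCells d k lam) ∧
    ∃ (π : Equiv.Perm (Fin k)) (v : (Fin k → Fin d) → ℂ),
      x = (permMat d k π).mulVec ((youngSymMat d k t).mulVec v)}

/-- The `k`-fold tensor power `ρ^{⊗k}` of a matrix `ρ` on `ℂ^d`. -/
def tensorPow (d k : ℕ) (ρ : Matrix (Fin d) (Fin d) ℂ) :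
    Matrix (Fin k → Fin d) (Fin k → Fin d) ℂ :=
  Matrix.of fun v w => ∏ j, ρ (v j) (w j)


/-! ### The real group algebra of the symmetric group -/

/-- real group algebra of `S_k` -/
abbrev GA (k : ℕ) := MonoidAlgebra ℝ (Equiv.Perm (Fin k))

/-- group element in the group algebra -/
abbrev gel {k : ℕ} (g : Equiv.Perm (Fin k)) : GA k := MonoidAlgebra.of ℝ _ g

/-- column antisymmetriser -/
def colA {k : ℕ} (t : Fin k → ℕ × ℕ) : GA k :=
  ∑ π ∈ univ.filter (fun π : Equiv.Perm (Fin k) => ∀ j, (t (π j)).2 = (t j).2),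
    (((Equiv.Perm.sign π : ℤ) : ℝ) • gel π)

/-- row symmetriser -/
def rowA {k : ℕ} (t : Fin k → ℕ × ℕ) : GA k :=
  ∑ π ∈ univ.filter (fun π : Equiv.Perm (Fin k) => ∀ j, (t (π j)).1 = (t j).1), gel π

lemma gel_mul {k : ℕ} (g h : Equiv.Perm (Fin k)) : gel g * gel h = gel (g * h) :=
  (map_mul (MonoidAlgebra.of ℝ _) g h).symm

lemma gel_one {k : ℕ} : gel (1 : Equiv.Perm (Fin k)) = 1 := map_one (MonoidAlgebra.of ℝ _)

lemma sign_real_mul {k : ℕ} (g h : Equiv.Perm (Fin k)) :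
    ((Equiv.Perm.sign (g * h) : ℤ) : ℝ) =
      ((Equiv.Perm.sign g : ℤ) : ℝ) * ((Equiv.Perm.sign h : ℤ) : ℝ) := by
  simp [Equiv.Perm.sign_mul]

lemma sign_real_sq {k : ℕ} (g : Equiv.Perm (Fin k)) :
    ((Equiv.Perm.sign g : ℤ) : ℝ) * ((Equiv.Perm.sign g : ℤ) : ℝ) = 1 := by
  rcases Int.units_eq_one_or (Equiv.Perm.sign g) with h | h <;> simp [h]

lemma col_inv {k : ℕ} {α : Type*} {f : Fin k → α} {τ : Equiv.Perm (Fin k)}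
    (h : ∀ j, f (τ j) = f j) : ∀ j, f (τ⁻¹ j) = f j := by
  intro j
  have := h (τ⁻¹ j)
  simpa using this.symm

lemma gel_mul_rowA {k : ℕ} (t : Fin k → ℕ × ℕ) (τ : Equiv.Perm (Fin k))
    (h : ∀ j, (t (τ j)).1 = (t j).1) : gel τ * rowA t = rowA t := by
  unfold rowA
  rw [Finset.mul_sum]
  refine Finset.sum_bij' (fun π _ => τ * π) (fun π _ => τ⁻¹ * π) ?_ ?_ ?_ ?_ ?_
  · intro π hπ
    simp only [mem_filter, mem_univ, true_and, Equiv.Perm.mul_apply] at hπ ⊢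
    intro j; rw [h, hπ]
  · intro π hπ
    simp only [mem_filter, mem_univ, true_and, Equiv.Perm.mul_apply] at hπ ⊢
    intro j; rw [col_inv (f := fun j => (t j).1) h, hπ]
  · intro π _; simp
  · intro π _; simp
  · intro π _; exact gel_mul _ _

lemma rowA_mul_gel {k : ℕ} (t : Fin k → ℕ × ℕ) (τ : Equiv.Perm (Fin k))
    (h : ∀ j, (t (τ j)).1 = (t j).1) : rowA t * gel τ = rowA t := by
  unfold rowA
  rw [Finset.sum_mul]
  refine Finset.sum_bij' (fun π _ => π * τ) (fun π _ => π * τ⁻¹) ?_ ?_ ?_ ?_ ?_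
  · intro π hπ
    simp only [mem_filter, mem_univ, true_and, Equiv.Perm.mul_apply] at hπ ⊢
    intro j; rw [hπ, h]
  · intro π hπ
    simp only [mem_filter, mem_univ, true_and, Equiv.Perm.mul_apply] at hπ ⊢
    intro j; rw [hπ, col_inv (f := fun j => (t j).1) h]
  · intro π _; simp
  · intro π _; simp
  · intro π _; exact gel_mul _ _

lemma gel_mul_colA {k : ℕ} (t : Fin k → ℕ × ℕ) (τ : Equiv.Perm (Fin k))
    (h : ∀ j, (t (τ j)).2 = (t j).2) :
    gel τ * colA t = ((Equiv.Perm.sign τ : ℤ) : ℝ) • colA t := by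
  unfold colA
  rw [Finset.mul_sum, Finset.smul_sum]
  refine Finset.sum_bij' (fun π _ => τ * π) (fun π _ => τ⁻¹ * π) ?_ ?_ ?_ ?_ ?_
  · intro π hπ
    simp only [mem_filter, mem_univ, true_and, Equiv.Perm.mul_apply] at hπ ⊢
    intro j; rw [h, hπ]
  · intro π hπ
    simp only [mem_filter, mem_univ, true_and, Equiv.Perm.mul_apply] at hπ ⊢
    intro j; rw [col_inv (f := fun j => (t j).2) h, hπ]
  · intro π _; simp
  · intro π _; simp
  · intro π _
    rw [smul_smul, sign_real_mul, ← mul_assoc, sign_real_sq, one_mul, mul_smul_comm, gel_mul]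

lemma colA_mul_gel {k : ℕ} (t : Fin k → ℕ × ℕ) (τ : Equiv.Perm (Fin k))
    (h : ∀ j, (t (τ j)).2 = (t j).2) :
    colA t * gel τ = ((Equiv.Perm.sign τ : ℤ) : ℝ) • colA t := by
  unfold colA
  rw [Finset.sum_mul, Finset.smul_sum]
  refine Finset.sum_bij' (fun π _ => π * τ) (fun π _ => π * τ⁻¹) ?_ ?_ ?_ ?_ ?_
  · intro π hπ
    simp only [mem_filter, mem_univ, true_and, Equiv.Perm.mul_apply] at hπ ⊢
    intro j; rw [hπ, h]
  · intro π hπ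
    simp only [mem_filter, mem_univ, true_and, Equiv.Perm.mul_apply] at hπ ⊢
    intro j; rw [hπ, col_inv (f := fun j => (t j).2) h]
  · intro π _; simp
  · intro π _; simp
  · intro π _
    rw [smul_smul, sign_real_mul, mul_comm, mul_assoc, sign_real_sq, mul_one, smul_mul_assoc,
      gel_mul]

lemma conj_colA {k : ℕ} (t : Fin k → ℕ × ℕ) (g : Equiv.Perm (Fin k)) :
    gel g * colA t = colA (t ∘ ⇑g⁻¹) * gel g := by
  unfold colA
  rw [Finset.mul_sum, Finset.sum_mul]
  refine Finset.sum_bij' (fun π _ => g * π * g⁻¹) (fun π _ => g⁻¹ * π * g) ?_ ?_ ?_ ?_ ?_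
  · intro π hπ
    simp only [mem_filter, mem_univ, true_and, Equiv.Perm.mul_apply, Function.comp] at hπ ⊢
    intro j; simp [hπ]
  · intro π hπ
    simp only [mem_filter, mem_univ, true_and, Equiv.Perm.mul_apply, Function.comp] at hπ ⊢
    intro j; have := hπ (g j); simpa using this
  · intro π _; group
  · intro π _; group
  · intro π _
    rw [mul_smul_comm, smul_mul_assoc, gel_mul, gel_mul]
    congr 2
    · rw [Equiv.Perm.sign_mul, Equiv.Perm.sign_mul, Equiv.Perm.sign_inv, mul_comm, ← mul_assoc]
      simp
    · group

lemma conj_rowA {k : ℕ} (t : Fin k → ℕ × ℕ) (g : Equiv.Perm (Fin k)) :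
    gel g * rowA t = rowA (t ∘ ⇑g⁻¹) * gel g := by
  unfold rowA
  rw [Finset.mul_sum, Finset.sum_mul]
  refine Finset.sum_bij' (fun π _ => g * π * g⁻¹) (fun π _ => g⁻¹ * π * g) ?_ ?_ ?_ ?_ ?_
  · intro π hπ
    simp only [mem_filter, mem_univ, true_and, Equiv.Perm.mul_apply, Function.comp] at hπ ⊢
    intro j; simp [hπ]
  · intro π hπ
    simp only [mem_filter, mem_univ, true_and, Equiv.Perm.mul_apply, Function.comp] at hπ ⊢
    intro j; have := hπ (g j); simpa using this
  · intro π _; group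
  · intro π _; group
  · intro π _
    rw [gel_mul, gel_mul]
    congr 1; group

lemma swap_inv {k : ℕ} {α : Type*} {f : Fin k → α} {a b : Fin k} (h : f a = f b) :
    ∀ j, f (Equiv.swap a b j) = f j := by
  intro j
  rw [Equiv.swap_apply_def]
  split_ifs with h1 h2
  · rw [h1, h]
  · rw [h2, h]
  · rfl

lemma eq_zero_of_eq_neg {k : ℕ} {x : GA k} (h : x = -x) : x = 0 := by
  have h2 : (2 : ℝ) • x = 0 := by
    rw [two_smul]; nth_rewrite 2 [h]; exact add_neg_cancel x
  have := congrArg (fun y => (2⁻¹ : ℝ) • y) h2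
  simpa [smul_smul] using this

lemma rowA_mul_colA_eq_zero {k : ℕ} (t s : Fin k → ℕ × ℕ) {a b : Fin k} (hab : a ≠ b)
    (h1 : (t a).1 = (t b).1) (h2 : (s a).2 = (s b).2) : rowA t * colA s = 0 := by
  have e : rowA t * colA s = - (rowA t * colA s) := by
    conv_lhs => rw [← rowA_mul_gel t (Equiv.swap a b) (swap_inv (f := fun j => (t j).1) h1),
      mul_assoc, gel_mul_colA s (Equiv.swap a b) (swap_inv (f := fun j => (s j).2) h2)]
    simp [Equiv.Perm.sign_swap hab]
  exact eq_zero_of_eq_neg e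

lemma colA_mul_rowA_eq_zero {k : ℕ} (t s : Fin k → ℕ × ℕ) {a b : Fin k} (hab : a ≠ b)
    (h1 : (t a).1 = (t b).1) (h2 : (s a).2 = (s b).2) : colA s * rowA t = 0 := by
  have e : colA s * rowA t = - (colA s * rowA t) := by
    conv_lhs => rw [← gel_mul_rowA t (Equiv.swap a b) (swap_inv (f := fun j => (t j).1) h1),
      ← mul_assoc, colA_mul_gel s (Equiv.swap a b) (swap_inv (f := fun j => (s j).2) h2)]
    simp [Equiv.Perm.sign_swap hab]
  exact eq_zero_of_eq_neg e

/-! ### Tableaux and dominance -/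

/-- `t` is a tableau of shape `lam` -/
def IsTab {k : ℕ} (lam : ℕ → ℕ) (t : Fin k → ℕ × ℕ) : Prop :=
  Set.BijOn t Set.univ {c | c.2 < lam c.1}

lemma IsTab.comp {k : ℕ} {lam : ℕ → ℕ} {t : Fin k → ℕ × ℕ} (h : IsTab lam t)
    (g : Equiv.Perm (Fin k)) : IsTab lam (t ∘ ⇑g) :=
  Set.BijOn.comp h (Set.bijOn_univ.mpr g.bijective)

lemma IsTab.inj {k : ℕ} {lam : ℕ → ℕ} {t : Fin k → ℕ × ℕ} (h : IsTab lam t) :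
    Function.Injective t := Set.injOn_univ.mp h.injOn

lemma IsTab.mem {k : ℕ} {lam : ℕ → ℕ} {t : Fin k → ℕ × ℕ} (h : IsTab lam t) (j : Fin k) :
    (t j).2 < lam (t j).1 := h.mapsTo (Set.mem_univ j)

lemma IsTab.ex {k : ℕ} {lam : ℕ → ℕ} {t : Fin k → ℕ × ℕ} (h : IsTab lam t) {a b : ℕ}
    (hb : b < lam a) : ∃ j, t j = (a, b) := by
  obtain ⟨j, -, hj⟩ := h.surjOn (show (a, b) ∈ {c : ℕ × ℕ | c.2 < lam c.1} from hb)
  exact ⟨j, hj⟩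

lemma IsTab.card_row {k : ℕ} {lam : ℕ → ℕ} {t : Fin k → ℕ × ℕ} (h : IsTab lam t) (i : ℕ) :
    (univ.filter (fun j => (t j).1 = i)).card = lam i := by
  rw [← Finset.card_range (lam i)]
  refine Finset.card_bij (fun j _ => (t j).2) ?_ ?_ ?_
  · intro j hj
    simp only [mem_filter, mem_univ, true_and] at hj
    have := h.mem j
    rw [hj] at this
    simpa using this
  · intro a ha b hb hab
    simp only [mem_filter, mem_univ, true_and] at ha hb
    exact h.inj (Prod.ext (ha.trans hb.symm) hab)
  · intro b hb
    obtain ⟨j, hj⟩ := h.ex (a := i) (b := b) (by simpa using hb)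
    exact ⟨j, by simp [hj], by simp [hj]⟩

lemma IsTab.card_rows_lt {k : ℕ} {lam : ℕ → ℕ} {t : Fin k → ℕ × ℕ} (h : IsTab lam t) (i : ℕ) :
    (univ.filter (fun j => (t j).1 < i)).card = ∑ r ∈ range i, lam r := by
  rw [Finset.card_eq_sum_card_fiberwise (f := fun j => (t j).1) (t := range i)]
  · refine Finset.sum_congr rfl fun r hr => ?_
    rw [← h.card_row r, Finset.filter_filter]
    congr 1
    ext j
    simp only [mem_filter, mem_univ, true_and, mem_range] at hr ⊢
    omega
  · intro j hj
    simpa using hj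

/-- Words that are injective on the columns of a tableau satisfy the dominance inequality. -/
lemma IsTab.dominance {k : ℕ} {lam : ℕ → ℕ} (hlam : Antitone lam) {t : Fin k → ℕ × ℕ}
    (h : IsTab lam t) (w : Fin k → ℕ)
    (hw : ∀ a b, a ≠ b → (t a).2 = (t b).2 → w a ≠ w b) (i : ℕ) :
    (univ.filter (fun j => w j < i)).card ≤ ∑ r ∈ range i, lam r := by
  rw [← h.card_rows_lt i]
  rw [Finset.card_eq_sum_card_fiberwise (f := fun j => (t j).2)
      (t := univ.image (fun j => (t j).2)) (by intro j _; simp),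
    Finset.card_eq_sum_card_fiberwise (s := univ.filter (fun j => (t j).1 < i))
      (f := fun j => (t j).2)
      (t := univ.image (fun j => (t j).2)) (by intro j _; simp)]
  refine Finset.sum_le_sum fun c _ => ?_
  by_cases hc : ∀ j, (t j).2 = c → (t j).1 < i
  · refine Finset.card_le_card fun j hj => ?_
    simp only [mem_filter, mem_univ, true_and] at hj ⊢
    exact ⟨hc j hj.2, hj.2⟩
  · push Not at hc
    obtain ⟨j₀, hj₀, hi⟩ := hc
    have h1 : ((univ.filter (fun j => w j < i)).filter (fun j => (t j).2 = c)).card ≤ i := by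
      conv_rhs => rw [← Finset.card_range i]
      refine Finset.card_le_card_of_injOn w ?_ ?_
      · intro j hj
        simp only [Finset.coe_filter, mem_filter, mem_univ, true_and, Set.mem_ofPred_eq] at hj
        simpa using hj.1
      · intro a ha b hb hab
        simp only [Finset.coe_filter, mem_filter, mem_univ, true_and, Set.mem_ofPred_eq] at ha hb
        by_contra hne
        exact hw a b hne (ha.2.trans hb.2.symm) hab
    refine h1.trans ?_
    have hlt : ∀ r, r < i → c < lam r := fun r hr =>
      lt_of_lt_of_le (by have := h.mem j₀; rwa [hj₀] at this) (hlam (by omega : r ≤ (t j₀).1))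
    have : Nonempty (Fin k) := ⟨j₀⟩
    choose! f hf using fun r (hr : r < i) => h.ex (hlt r hr)
    conv_lhs => rw [← Finset.card_range i]
    refine Finset.card_le_card_of_injOn f ?_ ?_
    · intro r hr
      have hr' : r < i := by simpa using hr
      simp [hf r hr', hr']
    · intro a ha b hb hab
      have ha' : a < i := by simpa using ha
      have hb' : b < i := by simpa using hb
      have := hf a ha'
      rw [hab, hf b hb'] at this
      simpa using this.symm

lemma dom_of_ne_zero {k : ℕ} {lam mu : ℕ → ℕ} (hmu : Antitone mu)
    {t s : Fin k → ℕ × ℕ} (ht : IsTab lam t) (hs : IsTab mu s)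
    (hne : rowA t * colA s ≠ 0 ∨ colA s * rowA t ≠ 0) (i : ℕ) :
    ∑ r ∈ range i, lam r ≤ ∑ r ∈ range i, mu r := by
  rw [← ht.card_rows_lt i]
  refine hs.dominance hmu (fun j => (t j).1) ?_ i
  intro a b hab h2 h1
  rcases hne with hne | hne
  · exact hne (rowA_mul_colA_eq_zero t s hab h1 h2)
  · exact hne (colA_mul_rowA_eq_zero t s hab h1 h2)

lemma eq_of_partial_sums {lam mu : ℕ → ℕ}
    (h : ∀ i, ∑ r ∈ range i, lam r = ∑ r ∈ range i, mu r) : lam = mu := by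
  funext i
  have h1 := h i
  have h2 := h (i + 1)
  rw [Finset.sum_range_succ, Finset.sum_range_succ] at h2
  omega

lemma mul_gel_all {k : ℕ} (a b : GA k) (h : ∀ g, a * gel g * b = 0) (y : GA k) :
    a * y * b = 0 := by
  induction y using MonoidAlgebra.induction_on with
  | of g => exact h g
  | add x y hx hy => rw [mul_add, add_mul, hx, hy, add_zero]
  | smul r x hx => rw [mul_smul_comm, smul_mul_assoc, hx, smul_zero]

/-- Young symmetrisers of different shapes annihilate each other. -/
lemma young_orth {k : ℕ} {lam mu : ℕ → ℕ} (hlam : Antitone lam) (hmu : Antitone mu)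
    (hne : lam ≠ mu) {t s : Fin k → ℕ × ℕ} (ht : IsTab lam t) (hs : IsTab mu s) (y : GA k) :
    colA t * rowA t * y * (colA s * rowA s) = 0 := by
  by_cases h1 : ∀ g, rowA t * gel g * colA s = 0
  · have := mul_gel_all _ _ h1 y
    calc _ = colA t * (rowA t * y * colA s) * rowA s := by simp only [mul_assoc]
      _ = 0 := by rw [this]; simp
  by_cases h2 : ∀ g, colA t * gel g * rowA s = 0
  · have := mul_gel_all _ _ h2 (rowA t * y * colA s)
    rw [← this]; simp only [mul_assoc]
  exfalso
  push Not at h1 h2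
  obtain ⟨g, hg⟩ := h1
  obtain ⟨g', hg'⟩ := h2
  rw [mul_assoc, conj_colA, ← mul_assoc] at hg
  rw [mul_assoc, conj_rowA, ← mul_assoc] at hg'
  have a1 := dom_of_ne_zero hmu ht (hs.comp g⁻¹) (Or.inl (left_ne_zero_of_mul hg))
  have a2 := dom_of_ne_zero hlam (hs.comp g'⁻¹) ht (Or.inr (left_ne_zero_of_mul hg'))
  exact hne (eq_of_partial_sums fun i => le_antisymm (a1 i) (a2 i))


/-! ### The sum of all transpositions -/

/-- sum over all ordered pairs of the transposition -/
def transSum (k : ℕ) : GA k := ∑ p : Fin k × Fin k, gel (Equiv.swap p.1 p.2)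

lemma transSum_comm_gel {k : ℕ} (g : Equiv.Perm (Fin k)) :
    gel g * transSum k = transSum k * gel g := by
  unfold transSum
  rw [Finset.mul_sum, Finset.sum_mul]
  refine Fintype.sum_equiv (Equiv.prodCongr g g) _ _ ?_
  rintro ⟨a, b⟩
  simp only [Equiv.prodCongr_apply, Prod.map_fst, Prod.map_snd, gel_mul]
  congr 1
  exact Equiv.mul_swap_eq_swap_mul g a b

lemma transSum_comm {k : ℕ} (y : GA k) : y * transSum k = transSum k * y := by
  induction y using MonoidAlgebra.induction_on with
  | of g => exact transSum_comm_gel g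
  | add x y hx hy => rw [mul_add, add_mul, hx, hy]
  | smul r x hx => rw [mul_smul_comm, smul_mul_assoc, hx]

lemma other_zero {k : ℕ} {lam : ℕ → ℕ} (hlam : Antitone lam) {t : Fin k → ℕ × ℕ}
    (h : IsTab lam t) {a b : Fin k} (h1 : (t a).1 < (t b).1) (h2 : (t a).2 ≠ (t b).2) :
    colA t * gel (Equiv.swap a b) * rowA t = 0 := by
  obtain ⟨c, hc⟩ := h.ex (a := (t a).1) (b := (t b).2) (lt_of_lt_of_le (h.mem b) (hlam h1.le))
  have hca : c ≠ a := by
    rintro rfl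
    exact h2 (by rw [hc])
  have hcb : c ≠ b := by
    rintro rfl
    rw [hc] at h1; simp at h1
  rw [mul_assoc, conj_rowA, ← mul_assoc,
    colA_mul_rowA_eq_zero (t ∘ ⇑(Equiv.swap a b)⁻¹) t hcb ?_ ?_, zero_mul]
  · simp [Equiv.swap_apply_of_ne_of_ne hca hcb, hc]
  · simp [hc]

/-- number of ordered pairs in a common row minus number of ordered pairs in a common column -/
def cont {k : ℕ} (t : Fin k → ℕ × ℕ) : ℝ :=
  ((univ.filter (fun p : Fin k × Fin k => (t p.1).1 = (t p.2).1)).card : ℝ) -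
  ((univ.filter (fun p : Fin k × Fin k => (t p.1).1 ≠ (t p.2).1 ∧ (t p.1).2 = (t p.2).2)).card : ℝ)

lemma transSum_young {k : ℕ} {lam : ℕ → ℕ} (hlam : Antitone lam) {t : Fin k → ℕ × ℕ}
    (h : IsTab lam t) : transSum k * (colA t * rowA t) = cont t • (colA t * rowA t) := by
  rw [← mul_assoc, ← transSum_comm, transSum, Finset.mul_sum, Finset.sum_mul]
  have key : ∀ p : Fin k × Fin k, colA t * gel (Equiv.swap p.1 p.2) * rowA t =
      ((if (t p.1).1 = (t p.2).1 then (1 : ℝ) else 0) -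
        (if (t p.1).1 ≠ (t p.2).1 ∧ (t p.1).2 = (t p.2).2 then (1 : ℝ) else 0)) •
          (colA t * rowA t) := by
    rintro ⟨a, b⟩
    dsimp only
    by_cases h1 : (t a).1 = (t b).1
    · rw [mul_assoc, gel_mul_rowA t _ (swap_inv (f := fun j => (t j).1) h1)]
      simp [h1]
    · by_cases h2 : (t a).2 = (t b).2
      · rw [colA_mul_gel t _ (swap_inv (f := fun j => (t j).2) h2)]
        have hab : a ≠ b := by rintro rfl; exact h1 rfl
        simp [h1, h2, Equiv.Perm.sign_swap hab]
      · simp only [h1, h2, if_false, and_false, sub_zero, zero_smul]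
        rcases lt_or_gt_of_ne h1 with h3 | h3
        · exact other_zero hlam h h3 h2
        · rw [Equiv.swap_comm]
          exact other_zero hlam h h3 (Ne.symm h2)
  rw [Finset.sum_congr rfl fun p _ => key p, ← Finset.sum_smul, Finset.sum_sub_distrib]
  simp [cont, Finset.sum_boole]

lemma card_pairs {k : ℕ} {lam : ℕ → ℕ} {t s : Fin k → ℕ × ℕ}
    (ht : IsTab lam t) (hs : IsTab lam s) (q : ℕ × ℕ → ℕ × ℕ → Prop) [∀ c c', Decidable (q c c')] :
    (univ.filter (fun p : Fin k × Fin k => q (t p.1) (t p.2))).card =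
      (univ.filter (fun p : Fin k × Fin k => q (s p.1) (s p.2))).card := by
  have ex : ∀ j, ∃ i, s i = t j := fun j => hs.ex (a := (t j).1) (b := (t j).2) (ht.mem j)
  have ex' : ∀ j, ∃ i, t i = s j := fun j => ht.ex (a := (s j).1) (b := (s j).2) (hs.mem j)
  choose f hf using ex
  choose f' hf' using ex'
  refine Finset.card_bij' (fun p _ => (f p.1, f p.2)) (fun p _ => (f' p.1, f' p.2)) ?_ ?_ ?_ ?_
  · intro p hp; simpa [hf] using hp
  · intro p hp; simpa [hf'] using hp
  · intro p hp; ext1 <;> exact ht.inj (by simp [hf, hf'])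
  · intro p hp; ext1 <;> exact hs.inj (by simp [hf, hf'])

lemma cont_eq {k : ℕ} {lam : ℕ → ℕ} {t s : Fin k → ℕ × ℕ}
    (ht : IsTab lam t) (hs : IsTab lam s) : cont t = cont s := by
  unfold cont
  rw [card_pairs ht hs (fun c c' => c.1 = c'.1),
    card_pairs ht hs (fun c c' => c.1 ≠ c'.1 ∧ c.2 = c'.2)]

lemma cont_ge {k d : ℕ} {lam : ℕ → ℕ} {t : Fin k → ℕ × ℕ}
    (ht : IsTab lam t) (hd : ∀ i, d ≤ i → lam i = 0) :
    ∑ i ∈ range d, (lam i : ℝ) ^ 2 - k * d ≤ cont t := by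
  have hrow : ∀ j, (t j).1 < d := by
    intro j
    by_contra hc
    have := ht.mem j
    rw [hd _ (not_lt.mp hc)] at this
    omega
  have e1 : (univ.filter (fun p : Fin k × Fin k => (t p.1).1 = (t p.2).1)).card =
      ∑ i ∈ range d, lam i ^ 2 := by
    rw [Finset.card_eq_sum_card_fiberwise (f := fun p => (t p.1).1) (t := range d)
      (by intro p _; simpa using hrow p.1)]
    refine Finset.sum_congr rfl fun i _ => ?_
    rw [← ht.card_row i, sq, ← Finset.card_product, Finset.filter_filter]
    congr 1
    ext p
    simp only [mem_filter, mem_univ, true_and, mem_product]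
    omega
  have e2 : (univ.filter (fun p : Fin k × Fin k =>
      (t p.1).1 ≠ (t p.2).1 ∧ (t p.1).2 = (t p.2).2)).card ≤ k * d := by
    have : (univ ×ˢ range d : Finset (Fin k × ℕ)).card = k * d := by simp
    rw [← this]
    refine Finset.card_le_card_of_injOn (fun p => (p.1, (t p.2).1)) ?_ ?_
    · intro p _
      simpa using hrow p.2
    · rintro ⟨a, b⟩ hp ⟨a', b'⟩ hq hpq
      simp only [Finset.coe_filter, mem_univ, true_and, Set.mem_ofPred_eq, Prod.mk.injEq] at hp hq hpq
      obtain ⟨rfl, h2⟩ := hpq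
      have := ht.inj (Prod.ext h2 (hp.2.symm.trans hq.2))
      rw [this]
  unfold cont
  rw [e1]
  have : ((univ.filter (fun p : Fin k × Fin k =>
      (t p.1).1 ≠ (t p.2).1 ∧ (t p.1).2 = (t p.2).2)).card : ℝ) ≤ k * d := by exact_mod_cast e2
  push_cast
  linarith

/-! ### Completeness -/

/-- the anti-automorphism `g ↦ g⁻¹` -/
def invHom (k : ℕ) : GA k →ₐ[ℝ] (GA k)ᵐᵒᵖ :=
  MonoidAlgebra.lift ℝ _ _
    { toFun := fun g => MulOpposite.op (gel g⁻¹)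
      map_one' := by simp [MonoidAlgebra.one_def]
      map_mul' := fun g h => by rw [← MulOpposite.op_mul, gel_mul, _root_.mul_inv_rev] }

/-- the anti-automorphism as a function -/
def iv {k : ℕ} (a : GA k) : GA k := (invHom k a).unop

lemma iv_gel {k : ℕ} (g : Equiv.Perm (Fin k)) : iv (gel g) = gel g⁻¹ := by
  simp [iv, invHom]

lemma iv_add {k : ℕ} (a b : GA k) : iv (a + b) = iv a + iv b := by simp [iv]
lemma iv_smul {k : ℕ} (r : ℝ) (b : GA k) : iv (r • b) = r • iv b := by simp [iv]
lemma iv_mul {k : ℕ} (a b : GA k) : iv (a * b) = iv b * iv a := by simp [iv]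
lemma iv_sum {k : ℕ} {α : Type*} (s : Finset α) (f : α → GA k) :
    iv (∑ i ∈ s, f i) = ∑ i ∈ s, iv (f i) := by simp [iv]

lemma iv_coeff {k : ℕ} (a : GA k) (g : Equiv.Perm (Fin k)) :
    (iv a).coeff g = a.coeff g⁻¹ := by
  classical
  induction a using MonoidAlgebra.induction_on with
  | of h =>
    rw [iv_gel]
    simp only [gel, MonoidAlgebra.of_apply, MonoidAlgebra.coeff_single, Finsupp.single_apply]
    simp [inv_eq_iff_eq_inv]
  | add x y hx hy => rw [iv_add, MonoidAlgebra.coeff_add, MonoidAlgebra.coeff_add]; simp [hx, hy]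
  | smul r x hx => rw [iv_smul, MonoidAlgebra.coeff_smul, MonoidAlgebra.coeff_smul]; simp [hx]

lemma iv_rowA {k : ℕ} (t : Fin k → ℕ × ℕ) : iv (rowA t) = rowA t := by
  unfold rowA
  rw [iv_sum]
  refine Finset.sum_bij' (fun π _ => π⁻¹) (fun π _ => π⁻¹) ?_ ?_ ?_ ?_ ?_
  · intro π hπ
    simp only [mem_filter, mem_univ, true_and] at hπ ⊢
    exact col_inv (f := fun j => (t j).1) hπ
  · intro π hπ
    simp only [mem_filter, mem_univ, true_and] at hπ ⊢
    exact col_inv (f := fun j => (t j).1) hπ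
  · intro π _; simp
  · intro π _; simp
  · intro π _; exact iv_gel _

lemma iv_colA {k : ℕ} (t : Fin k → ℕ × ℕ) : iv (colA t) = colA t := by
  unfold colA
  rw [iv_sum]
  refine Finset.sum_bij' (fun π _ => π⁻¹) (fun π _ => π⁻¹) ?_ ?_ ?_ ?_ ?_
  · intro π hπ
    simp only [mem_filter, mem_univ, true_and] at hπ ⊢
    exact col_inv (f := fun j => (t j).2) hπ
  · intro π hπ
    simp only [mem_filter, mem_univ, true_and] at hπ ⊢
    exact col_inv (f := fun j => (t j).2) hπ
  · intro π _; simp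
  · intro π _; simp
  · intro π _; rw [iv_smul, iv_gel, Equiv.Perm.sign_inv]

lemma coeff_mul_iv_one {k : ℕ} (a : GA k) : (a * iv a).coeff 1 = ∑ g, a.coeff g ^ 2 := by
  rw [MonoidAlgebra.coeff_mul_apply_left, Finsupp.sum_fintype _ _ (by simp)]
  refine Finset.sum_congr rfl fun g _ => ?_
  rw [iv_coeff]; simp [sq]

lemma coeff_mul_iv_one_pos {k : ℕ} (a : GA k) {g : Equiv.Perm (Fin k)} (h : a.coeff g ≠ 0) :
    0 < (a * iv a).coeff 1 := by
  rw [coeff_mul_iv_one]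
  exact Finset.sum_pos' (fun i _ => sq_nonneg _) ⟨g, mem_univ _, by positivity⟩

lemma young_coeff_one {k : ℕ} {t : Fin k → ℕ × ℕ} (ht : Function.Injective t) :
    (colA t * rowA t).coeff 1 = 1 := by
  classical
  unfold colA rowA
  rw [Finset.sum_mul_sum]
  simp only [smul_mul_assoc, gel_mul]
  simp only [MonoidAlgebra.coeff_sum, MonoidAlgebra.coeff_smul, Finsupp.coe_finsetSum, Finset.sum_apply,
    Finsupp.smul_apply]
  simp only [gel, MonoidAlgebra.of_apply, MonoidAlgebra.coeff_single, Finsupp.single_apply]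
  rw [Finset.sum_eq_single 1, Finset.sum_eq_single 1]
  · simp
  · intro π _ hπ; simp [hπ]
  · intro h; simp at h
  · intro π hπ hne
    refine Finset.sum_eq_zero fun σ hσ => ?_
    rw [if_neg, smul_zero]
    intro he
    apply hne
    simp only [mem_filter, mem_univ, true_and] at hπ hσ
    have hs : σ = π⁻¹ := (inv_eq_of_mul_eq_one_right he).symm
    have h1 := col_inv (f := fun j => (t j).2) hπ
    have : π⁻¹ = 1 := by
      ext j
      congr 1
      refine ht (Prod.ext ?_ (h1 j))
      have := hσ j
      rwa [hs] at this
    simpa using this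
  · intro h; simp at h

/-- central element attached to a tableau -/
def zel {k : ℕ} (t : Fin k → ℕ × ℕ) : GA k :=
  ∑ g : Equiv.Perm (Fin k), gel g * (colA t * rowA t) * iv (colA t * rowA t) * gel g⁻¹

lemma gel_mul_zel {k : ℕ} (t : Fin k → ℕ × ℕ) (h : Equiv.Perm (Fin k)) :
    gel h * zel t = zel t * gel h := by
  unfold zel
  rw [Finset.mul_sum, Finset.sum_mul]
  refine Fintype.sum_equiv (Equiv.mulLeft h) _ _ fun g => ?_
  simp only [Equiv.coe_mulLeft, _root_.mul_inv_rev, ← gel_mul, mul_assoc]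
  rw [gel_mul h⁻¹ h]
  simp

lemma zel_coeff_conj {k : ℕ} (t : Fin k → ℕ × ℕ) (g h : Equiv.Perm (Fin k)) :
    (zel t).coeff (h * g * h⁻¹) = (zel t).coeff g := by
  have := congrArg (fun a => MonoidAlgebra.coeff a (h * g)) (gel_mul_zel t h)
  simp only [gel, MonoidAlgebra.of_apply, MonoidAlgebra.coeff_single_mul_apply,
    MonoidAlgebra.coeff_mul_single_apply] at this
  simpa using this.symm

lemma coeff_conj_one {k : ℕ} (a : GA k) (h : Equiv.Perm (Fin k)) :
    (gel h * a * gel h⁻¹).coeff 1 = a.coeff 1 := by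
  simp [gel, MonoidAlgebra.of_apply, MonoidAlgebra.coeff_single_mul_apply,
    MonoidAlgebra.coeff_mul_single_apply]

lemma zel_coeff_one_pos {k : ℕ} {t : Fin k → ℕ × ℕ} (ht : Function.Injective t) :
    0 < (zel t).coeff 1 := by
  unfold zel
  simp only [MonoidAlgebra.coeff_sum, Finsupp.coe_finsetSum, Finset.sum_apply]
  refine Finset.sum_pos (fun g _ => ?_) univ_nonempty
  rw [mul_assoc (gel g), coeff_conj_one]
  exact coeff_mul_iv_one_pos _ (g := 1) (by rw [young_coeff_one ht]; exact one_ne_zero)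

lemma iv_iv {k : ℕ} (a : GA k) : iv (iv a) = a := by
  ext g
  rw [iv_coeff, iv_coeff, inv_inv]

lemma iv_zel {k : ℕ} (t : Fin k → ℕ × ℕ) : iv (zel t) = zel t := by
  unfold zel
  rw [iv_sum]
  refine Finset.sum_congr rfl fun g _ => ?_
  generalize colA t * rowA t = e
  simp only [iv_mul, iv_iv, iv_gel, inv_inv, mul_assoc]

lemma zel_mul_self_ne {k : ℕ} {t : Fin k → ℕ × ℕ} (ht : Function.Injective t) :
    zel t * zel t ≠ 0 := by
  intro h
  have := coeff_mul_iv_one_pos (zel t) (zel_coeff_one_pos ht).ne'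
  rw [iv_zel, h] at this
  simp at this

lemma zel_mul_zel {k : ℕ} {lam mu : ℕ → ℕ} (hlam : Antitone lam) (hmu : Antitone mu)
    (hne : lam ≠ mu) {t s : Fin k → ℕ × ℕ} (ht : IsTab lam t) (hs : IsTab mu s) :
    zel t * zel s = 0 := by
  unfold zel
  rw [Finset.sum_mul_sum]
  refine Finset.sum_eq_zero fun g _ => Finset.sum_eq_zero fun h _ => ?_
  have := young_orth hlam hmu hne ht hs (iv (colA t * rowA t) * gel g⁻¹ * gel h)
  calc _ = gel g * ((colA t * rowA t) * (iv (colA t * rowA t) * gel g⁻¹ * gel h) *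
        (colA s * rowA s)) * (iv (colA s * rowA s) * gel h⁻¹) := by simp only [mul_assoc]
    _ = 0 := by rw [this]; simp


/-- the shape attached to a partition -/
def shp {n : ℕ} (p : n.Partition) (i : ℕ) : ℕ := p.parts.countP (fun a => i < a)

lemma shp_antitone {n : ℕ} (p : n.Partition) : Antitone (shp p) := by
  intro i j hij
  unfold shp
  rw [Multiset.countP_eq_card_filter, Multiset.countP_eq_card_filter]
  exact Multiset.card_le_card (Multiset.monotone_filter_right _ fun a h => lt_of_le_of_lt hij h)

lemma countP_step (m : Multiset ℕ) (a : ℕ) :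
    m.countP (fun b => a < b) + m.count a = m.countP (fun b => a ≤ b) := by
  induction m using Multiset.induction_on with
  | empty => simp
  | cons b m ih =>
    rw [Multiset.countP_cons, Multiset.count_cons, Multiset.countP_cons, ← ih]
    split_ifs <;> omega

lemma shp_injective {n : ℕ} : Function.Injective (shp (n := n)) := by
  intro p q h
  ext a
  rcases a with _ | a
  · rw [Multiset.count_eq_zero_of_notMem, Multiset.count_eq_zero_of_notMem]
    · intro h0; exact absurd (q.parts_pos h0) (lt_irrefl _)
    · intro h0; exact absurd (p.parts_pos h0) (lt_irrefl _)
  · have h1 := congrFun h a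
    have h2 := congrFun h (a + 1)
    have hp := countP_step p.parts (a + 1)
    have hq := countP_step q.parts (a + 1)
    unfold shp at h1 h2
    simp only [Nat.succ_le_iff] at hp hq
    omega

lemma sum_countP (m : Multiset ℕ) (n : ℕ) (h : ∀ a ∈ m, a ≤ n) :
    ∑ i ∈ range n, m.countP (fun a => i < a) = m.sum := by
  induction m using Multiset.induction_on with
  | empty => simp
  | cons b m ih =>
    have hb : b ≤ n := h b (by simp)
    simp only [Multiset.countP_cons, Finset.sum_add_distrib, Multiset.sum_cons]
    rw [ih fun a ha => h a (by simp [ha]), Finset.sum_boole]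
    have : (range n).filter (fun i => i < b) = range b := by
      ext i; simp only [mem_filter, mem_range]; omega
    rw [this]; simp [add_comm]

lemma exists_tab {n k : ℕ} (hn : n = k) (p : n.Partition) :
    ∃ t : Fin k → ℕ × ℕ, IsTab (shp p) t := by
  subst hn
  have hle : ∀ a ∈ p.parts, a ≤ n := fun a ha => by
    conv_rhs => rw [← p.parts_sum]
    exact Multiset.single_le_sum (fun _ _ => Nat.zero_le _) a ha
  have hs := sum_countP p.parts n hle
  rw [p.parts_sum] at hs
  let S : Finset (Σ _ : ℕ, ℕ) := (range n).sigma fun i => range (shp p i)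
  have hS : S.card = n := by
    simp only [S, Finset.card_sigma, Finset.card_range]
    exact hs
  let e := S.equivFinOfCardEq hS
  refine ⟨fun j => ((e.symm j).1.1, (e.symm j).1.2), ?_, ?_, ?_⟩
  · intro j _
    have := (e.symm j).2
    simp only [S, Finset.mem_sigma, Finset.mem_range] at this
    exact this.2
  · intro a _ b _ hab
    simp only [Prod.mk.injEq] at hab
    apply e.symm.injective
    apply Subtype.ext
    exact Sigma.ext hab.1 (heq_of_eq hab.2)
  · rintro ⟨a, b⟩ hab
    have hab' : b < shp p a := hab
    have ha : a < n := by
      by_contra hc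
      have : shp p a = 0 := by
        unfold shp
        rw [Multiset.countP_eq_zero]
        intro x hx
        have := hle x hx
        omega
      omega
    have hm : (⟨a, b⟩ : Σ _ : ℕ, ℕ) ∈ S := by
      simp only [S, Finset.mem_sigma, Finset.mem_range]
      exact ⟨ha, hab'⟩
    exact ⟨e ⟨_, hm⟩, trivial, by simp⟩

/-- chosen tableau of a partition -/
def ptab {k : ℕ} (p : (Fintype.card (Fin k)).Partition) : Fin k → ℕ × ℕ :=
  (exists_tab (Fintype.card_fin k) p).choose

lemma ptab_spec {k : ℕ} (p : (Fintype.card (Fin k)).Partition) : IsTab (shp p) (ptab p) :=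
  (exists_tab (Fintype.card_fin k) p).choose_spec

lemma zel_linInd (k : ℕ) :
    LinearIndependent ℝ (fun p : (Fintype.card (Fin k)).Partition => zel (ptab p)) := by
  rw [Fintype.linearIndependent_iff]
  intro c hc p
  have h1 := congrArg (fun y => y * zel (ptab p)) hc
  simp only [Finset.sum_mul, zero_mul, smul_mul_assoc] at h1
  rw [Finset.sum_eq_single p] at h1
  · rcases smul_eq_zero.mp h1 with h | h
    · exact h
    · exact absurd h (zel_mul_self_ne (ptab_spec p).inj)
  · intro q _ hq
    rw [zel_mul_zel (shp_antitone q) (shp_antitone p) (fun h => hq (shp_injective h))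
      (ptab_spec q) (ptab_spec p), smul_zero]
  · intro h; simp at h

/-- class functions as elements of the group algebra -/
def classMap (k : ℕ) : ((Fintype.card (Fin k)).Partition → ℝ) →ₗ[ℝ] GA k where
  toFun F := ∑ g : Equiv.Perm (Fin k), F g.partition • gel g
  map_add' F F' := by simp [add_smul, Finset.sum_add_distrib]
  map_smul' r F := by simp [Finset.smul_sum, mul_smul]

lemma coeff_classMap (k : ℕ) (F : (Fintype.card (Fin k)).Partition → ℝ) (g : Equiv.Perm (Fin k)) :
    (classMap k F).coeff g = F g.partition := by
  classical
  simp only [classMap, LinearMap.coe_mk, AddHom.coe_mk]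
  simp only [MonoidAlgebra.coeff_sum, MonoidAlgebra.coeff_smul, Finsupp.coe_finsetSum,
    Finset.sum_apply, Finsupp.smul_apply]
  simp only [gel, MonoidAlgebra.of_apply, MonoidAlgebra.coeff_single, Finsupp.single_apply]
  simp

lemma mem_classMap {k : ℕ} (a : GA k)
    (h : ∀ g h : Equiv.Perm (Fin k), a.coeff (h * g * h⁻¹) = a.coeff g) :
    a ∈ LinearMap.range (classMap k) := by
  classical
  refine ⟨fun p => if hp : ∃ g : Equiv.Perm (Fin k), g.partition = p then a.coeff hp.choose else 0, ?_⟩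
  ext g
  rw [coeff_classMap]
  have hp : ∃ g' : Equiv.Perm (Fin k), g'.partition = g.partition := ⟨g, rfl⟩
  rw [dif_pos hp]
  obtain ⟨c, hc⟩ := isConj_iff.mp (Equiv.Perm.partition_eq_of_isConj.mpr hp.choose_spec)
  rw [← h hp.choose c, hc]

lemma one_mem_span (k : ℕ) : (1 : GA k) ∈
    Submodule.span ℝ (Set.range fun p : (Fintype.card (Fin k)).Partition => zel (ptab p)) := by
  classical
  have hle : Submodule.span ℝ (Set.range fun p : (Fintype.card (Fin k)).Partition => zel (ptab p))
      ≤ LinearMap.range (classMap k) := by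
    rw [Submodule.span_le]
    rintro _ ⟨p, rfl⟩
    exact mem_classMap _ fun g h => zel_coeff_conj _ g h
  have hf : Module.finrank ℝ (LinearMap.range (classMap k)) ≤
      Module.finrank ℝ (Submodule.span ℝ
        (Set.range fun p : (Fintype.card (Fin k)).Partition => zel (ptab p))) := by
    rw [finrank_span_eq_card (zel_linInd k)]
    refine (LinearMap.finrank_range_le _).trans ?_
    simp
  rw [Submodule.eq_of_le_of_finrank_le hle hf]
  refine mem_classMap _ fun g h => ?_
  simp only [MonoidAlgebra.one_def, MonoidAlgebra.coeff_single, Finsupp.single_apply]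
  simp only [eq_comm (a := (1 : Equiv.Perm (Fin k))), conj_eq_one_iff]


/-! ### The representation on tensor space -/

lemma permMat_mul_apply (d k : ℕ) (π : Equiv.Perm (Fin k))
    (M : Matrix (Fin k → Fin d) (Fin k → Fin d) ℂ) (v w : Fin k → Fin d) :
    (permMat d k π * M) v w = M (v ∘ ⇑π) w := by
  rw [Matrix.mul_apply, Finset.sum_eq_single (v ∘ ⇑π)]
  · rw [permMat, Matrix.of_apply, if_pos, one_mul]
    funext j; simp
  · intro u _ hu
    rw [permMat, Matrix.of_apply, if_neg, zero_mul]
    rintro rfl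
    apply hu
    funext j; simp
  · intro h; simp at h

lemma permMat_one (d k : ℕ) : permMat d k 1 = 1 := by
  ext v w
  simp [permMat, Matrix.one_apply]

lemma permMat_mul (d k : ℕ) (π σ : Equiv.Perm (Fin k)) :
    permMat d k (π * σ) = permMat d k π * permMat d k σ := by
  ext v w
  rw [permMat_mul_apply, permMat, permMat, Matrix.of_apply, Matrix.of_apply]
  congr 1
  rw [eq_iff_iff]
  constructor
  · rintro rfl; funext j; simp
  · intro h
    funext j
    have := congrFun h (π⁻¹ j)
    simpa using this

/-- representation of the group algebra -/
def rep (d k : ℕ) : GA k →ₐ[ℝ] Matrix (Fin k → Fin d) (Fin k → Fin d) ℂ :=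
  MonoidAlgebra.lift ℝ _ _
    { toFun := permMat d k
      map_one' := permMat_one d k
      map_mul' := permMat_mul d k }

lemma rep_gel (d k : ℕ) (g : Equiv.Perm (Fin k)) : rep d k (gel g) = permMat d k g :=
  MonoidAlgebra.lift_of _ _

lemma rep_young (d k : ℕ) (t : Fin k → ℕ × ℕ) :
    rep d k (colA t * rowA t) = youngSymMat d k t := by
  unfold youngSymMat colA rowA
  rw [map_mul, map_sum, map_sum]
  congr 1
  · refine Finset.sum_congr rfl fun π _ => ?_
    rw [map_smul, rep_gel]
    ext v w
    simp
  · exact Finset.sum_congr rfl fun π _ => rep_gel d k π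

lemma permMat_conjTranspose (d k : ℕ) (π : Equiv.Perm (Fin k)) :
    (permMat d k π)ᴴ = permMat d k π⁻¹ := by
  ext v w
  rw [Matrix.conjTranspose_apply, permMat, permMat, Matrix.of_apply, Matrix.of_apply]
  have : (w = v ∘ ⇑π⁻¹) ↔ (v = w ∘ ⇑(π⁻¹)⁻¹) := by
    constructor
    · rintro rfl; funext j; simp
    · rintro rfl; funext j; simp
  by_cases h : w = v ∘ ⇑π⁻¹
  · rw [if_pos h, if_pos (this.mp h)]; simp
  · rw [if_neg h, if_neg (fun h' => h (this.mpr h'))]; simp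

lemma rep_iv (d k : ℕ) (a : GA k) : rep d k (iv a) = (rep d k a)ᴴ := by
  induction a using MonoidAlgebra.induction_on with
  | of g =>
    exact (congrArg (rep d k) (iv_gel g)).trans
      (by rw [rep_gel, ← permMat_conjTranspose]; exact congrArg _ (rep_gel d k g).symm)
  | add x y hx hy => rw [iv_add, map_add, map_add, hx, hy, Matrix.conjTranspose_add]
  | smul r x hx => rw [iv_smul, map_smul, map_smul, hx, Matrix.conjTranspose_smul]; simp

/-- extension by zero -/
def extz {d k : ℕ} (lam : Fin d → Fin (k + 1)) (i : ℕ) : ℕ :=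
  if h : i < d then (lam ⟨i, h⟩ : ℕ) else 0

lemma extz_antitone {d k : ℕ} {lam : Fin d → Fin (k + 1)}
    (h : Antitone (fun i => (lam i : ℕ))) : Antitone (extz lam) := by
  intro i j hij
  unfold extz
  by_cases hj : j < d
  · rw [dif_pos hj, dif_pos (lt_of_le_of_lt hij hj)]
    exact h (show (⟨i, _⟩ : Fin d) ≤ ⟨j, hj⟩ from hij)
  · rw [dif_neg hj]; exact Nat.zero_le _

lemma extz_zero {d k : ℕ} (lam : Fin d → Fin (k + 1)) (i : ℕ) (hi : d ≤ i) : extz lam i = 0 :=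
  dif_neg (not_lt.mpr hi)

lemma extz_injective {d k : ℕ} : Function.Injective (extz (d := d) (k := k)) := by
  intro a b h
  funext i
  have := congrFun h i
  simp only [extz, i.2, dif_pos] at this
  exact Fin.ext this

lemma extz_cells {d k : ℕ} (lam : Fin d → Fin (k + 1)) :
    (↑(youngCells d k (extz lam)) : Set (ℕ × ℕ)) = {c | c.2 < extz lam c.1} := by
  ext ⟨a, b⟩
  simp only [youngCells, Finset.coe_filter, mem_product, mem_range, Set.mem_ofPred_eq]
  refine ⟨fun h => h.2, fun h => ⟨⟨?_, ?_⟩, h⟩⟩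
  · by_contra hc
    rw [extz_zero lam a (not_lt.mp hc)] at h
    omega
  · refine lt_of_lt_of_le h ?_
    unfold extz
    split_ifs
    · omega
    · omega

/-- the isotypic component in the normal form -/
abbrev iso (d k : ℕ) (lam : Fin d → Fin (k + 1)) : Submodule ℂ ((Fin k → Fin d) → ℂ) :=
  isotypic d k (extz lam)

lemma iso_le {d k : ℕ} {lam : Fin d → Fin (k + 1)} {S : Submodule ℂ ((Fin k → Fin d) → ℂ)}
    (h : ∀ t, IsTab (extz lam) t → ∀ g v, (rep d k (gel g * (colA t * rowA t))).mulVec v ∈ S) :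
    iso d k lam ≤ S := by
  unfold iso isotypic
  rw [Submodule.span_le]
  rintro x ⟨t, ht, g, v, rfl⟩
  rw [extz_cells] at ht
  have := h t ht g v
  rwa [map_mul, rep_young, rep_gel, ← Matrix.mulVec_mulVec] at this

lemma mem_iso {d k : ℕ} {lam : Fin d → Fin (k + 1)} {t : Fin k → ℕ × ℕ}
    (ht : IsTab (extz lam) t) (y : GA k) (v : (Fin k → Fin d) → ℂ) :
    (rep d k (y * (colA t * rowA t))).mulVec v ∈ iso d k lam := by
  induction y using MonoidAlgebra.induction_on with
  | of g =>
    refine Submodule.subset_span ⟨t, ?_, g, v, ?_⟩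
    · rw [extz_cells]; exact ht
    · rw [map_mul, rep_young, ← gel, rep_gel, ← Matrix.mulVec_mulVec]
  | add x y hx hy => rw [add_mul, map_add, Matrix.add_mulVec]; exact Submodule.add_mem _ hx hy
  | smul r x hx =>
    rw [smul_mul_assoc, map_smul]
    have : (r • rep d k (x * (colA t * rowA t))).mulVec v =
        (r : ℂ) • (rep d k (x * (colA t * rowA t))).mulVec v := by
      rw [← Matrix.smul_mulVec]
      congr 1
    rw [this]
    exact Submodule.smul_mem _ _ hx

/-- Valid shapes. -/
def Valid {d k : ℕ} (lam : Fin d → Fin (k + 1)) : Prop :=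
  Antitone (fun i => (lam i : ℕ)) ∧ (∑ i, (lam i : ℕ)) = k

/-- orthogonal projector on the isotypic component -/
def IsProj {d k : ℕ} (lam : Fin d → Fin (k + 1))
    (P : Matrix (Fin k → Fin d) (Fin k → Fin d) ℂ) : Prop :=
  P * P = P ∧ P.IsHermitian ∧ LinearMap.range P.mulVecLin = iso d k lam

lemma IsProj.mul_eq {d k : ℕ} {lam : Fin d → Fin (k + 1)}
    {P : Matrix (Fin k → Fin d) (Fin k → Fin d) ℂ} (hP : IsProj lam P)
    (M : Matrix (Fin k → Fin d) (Fin k → Fin d) ℂ) (h : ∀ v, M.mulVec v ∈ iso d k lam) :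
    P * M = M := by
  apply Matrix.mulVec_injective
  funext v
  have := h v
  rw [← hP.2.2] at this
  obtain ⟨u, hu⟩ := this
  rw [Matrix.mulVecLin_apply] at hu
  rw [← Matrix.mulVec_mulVec, ← hu, Matrix.mulVec_mulVec, hP.1]

lemma IsProj.mem {d k : ℕ} {lam : Fin d → Fin (k + 1)}
    {P : Matrix (Fin k → Fin d) (Fin k → Fin d) ℂ} (hP : IsProj lam P) (v) :
    P.mulVec v ∈ iso d k lam := by
  rw [← hP.2.2]; exact ⟨v, rfl⟩

lemma IsProj.mul_young {d k : ℕ} {lam : Fin d → Fin (k + 1)}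
    {P : Matrix (Fin k → Fin d) (Fin k → Fin d) ℂ} (hP : IsProj lam P) {t : Fin k → ℕ × ℕ}
    (ht : IsTab (extz lam) t) (y : GA k) :
    P * rep d k (y * (colA t * rowA t)) = rep d k (y * (colA t * rowA t)) :=
  hP.mul_eq _ fun v => mem_iso ht y v

lemma IsProj.commute {d k : ℕ} {lam : Fin d → Fin (k + 1)}
    {P : Matrix (Fin k → Fin d) (Fin k → Fin d) ℂ} (hP : IsProj lam P)
    (M : Matrix (Fin k → Fin d) (Fin k → Fin d) ℂ) (hM : ∀ a, M * rep d k a = rep d k a * M) :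
    P * (M * P) = M * P := by
  refine hP.mul_eq _ fun v => ?_
  rw [← Matrix.mulVec_mulVec]
  have : iso d k lam ≤ (iso d k lam).comap M.mulVecLin := by
    refine iso_le fun t ht g v => ?_
    rw [Submodule.mem_comap, Matrix.mulVecLin_apply, Matrix.mulVec_mulVec, hM,
      ← Matrix.mulVec_mulVec]
    exact mem_iso ht _ _
  exact this (hP.mem v)

lemma IsProj.mul_young_ne {d k : ℕ} {lam mu : Fin d → Fin (k + 1)} (hl : Valid lam) (hm : Valid mu)
    (hne : lam ≠ mu)
    {P : Matrix (Fin k → Fin d) (Fin k → Fin d) ℂ} (hP : IsProj lam P) {s : Fin k → ℕ × ℕ}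
    (hs : IsTab (extz mu) s) (y : GA k) :
    P * rep d k (y * (colA s * rowA s)) = 0 := by
  set Y := rep d k (y * (colA s * rowA s)) with hY
  -- first, generators are orthogonal
  have horth : ∀ t, IsTab (extz lam) t → ∀ g,
      Yᴴ * rep d k (gel g * (colA t * rowA t)) = 0 := by
    intro t ht g
    rw [← Matrix.conjTranspose_eq_zero, Matrix.conjTranspose_mul,
      Matrix.conjTranspose_conjTranspose, map_mul, Matrix.conjTranspose_mul, Matrix.mul_assoc,
      ← Matrix.self_mul_conjTranspose_mul_eq_zero, ← rep_iv, ← rep_iv, hY, ← map_mul, ← map_mul,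
      ← map_mul]
    have := young_orth (extz_antitone hl.1) (extz_antitone hm.1)
      (fun h => hne (extz_injective h)) ht hs (iv (colA t * rowA t) * (iv (gel g) * y))
    rw [← map_zero (rep d k), ← this]
    congr 1
    simp only [mul_assoc]
  have h1 : Yᴴ * P = 0 := by
    apply Matrix.mulVec_injective
    funext v
    rw [← Matrix.mulVec_mulVec]
    have : iso d k lam ≤ LinearMap.ker (Yᴴ).mulVecLin := by
      refine iso_le fun t ht g v => ?_
      rw [LinearMap.mem_ker, Matrix.mulVecLin_apply, Matrix.mulVec_mulVec, horth t ht g]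
      simp
    have := this (hP.mem v)
    rw [LinearMap.mem_ker, Matrix.mulVecLin_apply] at this
    rw [this]; simp
  have := congrArg Matrix.conjTranspose h1
  rwa [Matrix.conjTranspose_mul, Matrix.conjTranspose_conjTranspose, hP.2.1.eq,
    Matrix.conjTranspose_zero] at this

/-! ### Words and dominance -/

lemma rep_colA_row {d k : ℕ} {s : Fin k → ℕ × ℕ} {w u : Fin k → Fin d}
    (h : rep d k (colA s) w u ≠ 0) (a b : Fin k) (hab : a ≠ b) (h2 : (s a).2 = (s b).2) :
    w a ≠ w b := by
  intro hw
  apply h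
  have h3 := gel_mul_colA s (Equiv.swap a b) (swap_inv (f := fun j => (s j).2) h2)
  have h4 := congrArg (fun y => rep d k y w u) h3
  simp only [map_mul, map_smul, rep_gel, permMat_mul_apply] at h4
  have h5 : w ∘ ⇑(Equiv.swap a b) = w := funext (swap_inv (f := w) hw)
  rw [h5, Equiv.Perm.sign_swap hab] at h4
  simp only [Units.val_neg, Units.val_one, Int.cast_neg, Int.cast_one, neg_smul, one_smul,
    Matrix.neg_apply] at h4
  exact self_eq_neg.mp h4

lemma rep_colA_dom {d k : ℕ} {lam : ℕ → ℕ} (hlam : Antitone lam) {s : Fin k → ℕ × ℕ}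
    (hs : IsTab lam s) {w u : Fin k → Fin d}
    (h : rep d k (colA s) w u ≠ 0) (i : ℕ) :
    (univ.filter (fun j => (w j : ℕ) < i)).card ≤ ∑ r ∈ range i, lam r :=
  hs.dominance hlam (fun j => (w j : ℕ))
    (fun a b hab h2 he => rep_colA_row h a b hab h2 (Fin.ext he)) i

lemma rep_colA_zero {d k : ℕ} {lam : ℕ → ℕ} (hlam : Antitone lam) {s : Fin k → ℕ × ℕ}
    (hs : IsTab lam s) (hd : lam d ≠ 0) : rep d k (colA s) = 0 := by
  ext w u
  by_contra h
  have h1 := rep_colA_dom hlam hs h d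
  have h2 : (univ.filter (fun j => (w j : ℕ) < d)) = univ := by
    ext j; simp
  have h3 := hs.card_rows_lt (d + 1)
  have h4 := Finset.card_le_univ (univ.filter (fun j => (s j).1 < d + 1))
  rw [h2] at h1
  rw [Finset.sum_range_succ] at h3
  simp only [Finset.card_univ] at h1
  omega

lemma IsProj.dom {d k : ℕ} {lam : Fin d → Fin (k + 1)} (hl : Valid lam)
    {P : Matrix (Fin k → Fin d) (Fin k → Fin d) ℂ} (hP : IsProj lam P) {w u : Fin k → Fin d}
    (h : P w u ≠ 0) (i : ℕ) :
    (univ.filter (fun j => (w j : ℕ) < i)).card ≤ ∑ r ∈ range i, extz lam r := by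
  by_contra hc
  apply h
  have : iso d k lam ≤ LinearMap.ker (LinearMap.proj w : ((Fin k → Fin d) → ℂ) →ₗ[ℂ] ℂ) := by
    refine iso_le fun t ht g v => ?_
    rw [LinearMap.mem_ker, LinearMap.proj_apply, ← mul_assoc, conj_colA, mul_assoc, map_mul,
      ← Matrix.mulVec_mulVec, Matrix.mulVec, dotProduct]
    refine Finset.sum_eq_zero fun u _ => ?_
    have h0 : rep d k (colA (t ∘ ⇑g⁻¹)) w u = 0 := by
      by_contra hne
      exact hc (rep_colA_dom (extz_antitone hl.1) (ht.comp g⁻¹) hne i)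
    exact mul_eq_zero_of_left h0 _
  have h2 := this (hP.mem (Pi.single u 1))
  rw [LinearMap.mem_ker, LinearMap.proj_apply] at h2
  simpa using h2

/-! ### Completeness in tensor space and the Casimir -/

lemma shp_valid {d k : ℕ} {lam : ℕ → ℕ} (hlam : Antitone lam) {t : Fin k → ℕ × ℕ}
    (ht : IsTab lam t) (hd : lam d = 0) :
    ∃ mu : Fin d → Fin (k + 1), Valid mu ∧ extz mu = lam := by
  have hle : ∀ i, lam i < k + 1 := by
    intro i
    rw [← ht.card_row i]
    have := Finset.card_le_univ (univ.filter (fun j => (t j).1 = i))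
    simp only [Fintype.card_fin] at this
    omega
  refine ⟨fun i => ⟨lam i, hle i⟩, ⟨fun i j hij => hlam hij, ?_⟩, ?_⟩
  · simp only
    rw [Fin.sum_univ_eq_sum_range (fun i => lam i) d, ← ht.card_rows_lt d]
    have : (univ.filter (fun j => (t j).1 < d)) = univ := by
      ext j
      simp only [mem_filter, mem_univ, true_and, iff_true]
      by_contra hc
      have h1 := ht.mem j
      have h2 := hlam (not_lt.mp hc)
      omega
    rw [this]; simp
  · funext i
    unfold extz
    split_ifs with h
    · rfl
    · have := hlam (not_lt.mp h)
      omega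

lemma sum_proj {d k : ℕ} (P : (Fin d → Fin (k + 1)) → Matrix (Fin k → Fin d) (Fin k → Fin d) ℂ)
    (hP : ∀ lam, Valid lam → IsProj lam (P lam)) (F : Finset (Fin d → Fin (k + 1)))
    (hF : ∀ lam, lam ∈ F ↔ Valid lam) : ∑ lam ∈ F, P lam = 1 := by
  have key : ∀ a ∈ Submodule.span ℝ
      (Set.range fun p : (Fintype.card (Fin k)).Partition => zel (ptab p)),
      (∑ lam ∈ F, P lam) * rep d k a = rep d k a := by
    intro a ha
    induction ha using Submodule.span_induction with
    | mem x hx =>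
      obtain ⟨p, rfl⟩ := hx
      by_cases hd : shp p d = 0
      · obtain ⟨mu, hmu, he⟩ := shp_valid (shp_antitone p) (ptab_spec p) hd
        have ht : IsTab (extz mu) (ptab p) := he ▸ ptab_spec p
        simp only [zel, map_sum, Finset.mul_sum]
        refine Finset.sum_congr rfl fun g _ => ?_
        rw [mul_assoc, map_mul, ← Matrix.mul_assoc, Finset.sum_mul,
          Finset.sum_eq_single mu, (hP mu hmu).mul_young ht]
        · intro lam hlam hne
          exact (hP lam ((hF lam).mp hlam)).mul_young_ne ((hF lam).mp hlam) hmu hne ht _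
        · intro h; exact absurd ((hF mu).mpr hmu) h
      · have h0 := rep_colA_zero (d := d) (shp_antitone p) (ptab_spec p) hd
        have : rep d k (zel (ptab p)) = 0 := by
          simp only [zel, map_sum, map_mul, h0]
          simp
        rw [this]; simp
    | zero => simp
    | add x y _ _ hx hy => rw [map_add, mul_add, hx, hy]
    | smul r x _ hx => rw [map_smul, mul_smul_comm, hx]
  have := key 1 (one_mem_span k)
  simpa using this

lemma casimir {d k : ℕ} {lam : Fin d → Fin (k + 1)} (hl : Valid lam)
    {P : Matrix (Fin k → Fin d) (Fin k → Fin d) ℂ} (hP : IsProj lam P) :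
    ∃ κ : ℝ, ∑ i ∈ range d, (extz lam i : ℝ) ^ 2 - k * d ≤ κ ∧
      rep d k (transSum k) * P = (κ : ℂ) • P := by
  by_cases hex : ∃ t : Fin k → ℕ × ℕ, IsTab (extz lam) t
  · obtain ⟨t, ht⟩ := hex
    refine ⟨cont t, cont_ge ht (extz_zero lam), ?_⟩
    apply Matrix.mulVec_injective
    funext v
    rw [← Matrix.mulVec_mulVec, Matrix.smul_mulVec]
    have : iso d k lam ≤ LinearMap.eqLocus (rep d k (transSum k)).mulVecLin
        ((cont t : ℂ) • LinearMap.id) := by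
      refine iso_le fun s hs g v => ?_
      rw [LinearMap.mem_eqLocus, Matrix.mulVecLin_apply, Matrix.mulVec_mulVec, ← map_mul,
        ← mul_assoc, ← transSum_comm, mul_assoc, transSum_young (extz_antitone hl.1) hs,
        mul_smul_comm, map_smul, cont_eq hs ht, LinearMap.smul_apply, LinearMap.id_apply,
        ← Matrix.smul_mulVec]
      congr 1
    exact this (hP.mem v)
  · refine ⟨_, le_rfl, ?_⟩
    have : P = 0 := by
      apply Matrix.mulVec_injective
      funext v
      have h1 : iso d k lam ≤ ⊥ := iso_le fun s hs => absurd ⟨s, hs⟩ hex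
      have := h1 (hP.mem v)
      rw [Submodule.mem_bot] at this
      rw [this]; simp
    rw [this]; simp


/-! ### Tensor powers and diagonalisation -/

lemma tensorPow_mul (d k : ℕ) (A B : Matrix (Fin d) (Fin d) ℂ) :
    tensorPow d k (A * B) = tensorPow d k A * tensorPow d k B := by
  ext v w
  simp only [tensorPow, Matrix.mul_apply, Matrix.of_apply]
  rw [Finset.prod_univ_sum, Fintype.piFinset_univ]
  exact Finset.sum_congr rfl fun u _ => Finset.prod_mul_distrib

lemma tensorPow_conjTranspose (d k : ℕ) (A : Matrix (Fin d) (Fin d) ℂ) :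
    tensorPow d k Aᴴ = (tensorPow d k A)ᴴ := by
  ext v w
  simp [tensorPow, Matrix.conjTranspose_apply]

lemma tensorPow_diagonal (d k : ℕ) (f : Fin d → ℂ) :
    tensorPow d k (Matrix.diagonal f) = Matrix.diagonal (fun w => ∏ j, f (w j)) := by
  ext v w
  simp only [tensorPow, Matrix.of_apply]
  by_cases h : v = w
  · subst h; simp
  · rw [Matrix.diagonal_apply_ne _ h]
    obtain ⟨j, hj⟩ := Function.ne_iff.mp h
    exact Finset.prod_eq_zero (mem_univ j) (Matrix.diagonal_apply_ne _ hj)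

lemma tensorPow_one (d k : ℕ) : tensorPow d k 1 = 1 := by
  rw [← Matrix.diagonal_one, tensorPow_diagonal]
  simp

lemma mul_permMat_apply (d k : ℕ) (π : Equiv.Perm (Fin k))
    (M : Matrix (Fin k → Fin d) (Fin k → Fin d) ℂ) (v w : Fin k → Fin d) :
    (M * permMat d k π) v w = M v (w ∘ ⇑π⁻¹) := by
  rw [Matrix.mul_apply, Finset.sum_eq_single (w ∘ ⇑π⁻¹)]
  · rw [permMat, Matrix.of_apply, if_pos rfl, mul_one]
  · intro u _ hu
    rw [permMat, Matrix.of_apply, if_neg hu, mul_zero]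
  · intro h; simp at h

lemma tensorPow_rep (d k : ℕ) (A : Matrix (Fin d) (Fin d) ℂ) (a : GA k) :
    tensorPow d k A * rep d k a = rep d k a * tensorPow d k A := by
  induction a using MonoidAlgebra.induction_on with
  | of g =>
    change tensorPow d k A * rep d k (gel g) = rep d k (gel g) * tensorPow d k A
    rw [rep_gel]
    ext v w
    rw [permMat_mul_apply, mul_permMat_apply]
    simp only [tensorPow, Matrix.of_apply, Function.comp]
    refine (Fintype.prod_equiv g _ _ fun j => ?_).symm
    simp
  | add x y hx hy => rw [map_add, mul_add, hx, hy, add_mul]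
  | smul r x hx => rw [map_smul, mul_smul_comm, hx, smul_mul_assoc]

lemma exists_diag {d : ℕ} (ρ : Matrix (Fin d) (Fin d) ℂ) (hρ : ρ.IsHermitian) (r : Fin d → ℝ)
    (hr : ∃ σ : Equiv.Perm (Fin d), ∀ i, r i = hρ.eigenvalues (σ i)) :
    ∃ W : Matrix (Fin d) (Fin d) ℂ, Wᴴ * W = 1 ∧
      ρ = W * Matrix.diagonal (fun i => (r i : ℂ)) * Wᴴ := by
  obtain ⟨σ, hσ⟩ := hr
  have hs := hρ.spectral_theorem
  rw [Unitary.conjStarAlgAut_apply] at hs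
  set U : Matrix (Fin d) (Fin d) ℂ := (hρ.eigenvectorUnitary : Matrix (Fin d) (Fin d) ℂ) with hU
  have hUU : Uᴴ * U = 1 := Unitary.coe_star_mul_self hρ.eigenvectorUnitary
  refine ⟨U.submatrix id σ, ?_, ?_⟩
  · have h0 := Matrix.submatrix_mul_equiv Uᴴ U σ (Equiv.refl _) σ
    simp only [Equiv.coe_refl] at h0
    rw [Matrix.conjTranspose_submatrix, h0, hUU]
    exact Matrix.submatrix_one_equiv σ
  · have h1 : Matrix.diagonal (fun i => (r i : ℂ)) =
        (Matrix.diagonal (fun i => (hρ.eigenvalues i : ℂ))).submatrix σ σ := by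
      rw [Matrix.submatrix_diagonal_equiv]
      congr 1
      funext i
      simp [hσ]
    rw [h1, Matrix.conjTranspose_submatrix, Matrix.submatrix_mul_equiv,
      Matrix.submatrix_mul_equiv]
    rw [Matrix.star_eq_conjTranspose] at hs
    simpa [Function.comp_def] using hs

lemma trace_proj {d k : ℕ} {lam : Fin d → Fin (k + 1)}
    {P : Matrix (Fin k → Fin d) (Fin k → Fin d) ℂ} (hP : IsProj lam P)
    (ρ W : Matrix (Fin d) (Fin d) ℂ) (r : Fin d → ℝ) (hW : Wᴴ * W = 1)
    (hρ : ρ = W * Matrix.diagonal (fun i => (r i : ℂ)) * Wᴴ) :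
    (P * tensorPow d k ρ).trace.re = ∑ w : Fin k → Fin d, (∏ j, r (w j)) * (P w w).re := by
  set M := tensorPow d k W with hM
  have c1 : P * (M * P) = M * P := hP.commute M (tensorPow_rep d k W)
  have c2 : P * (Mᴴ * P) = Mᴴ * P := by
    rw [hM, ← tensorPow_conjTranspose]
    exact hP.commute _ (tensorPow_rep d k Wᴴ)
  have c3 : P * (M * P) = P * M := by
    have := congrArg Matrix.conjTranspose c2
    simpa [Matrix.conjTranspose_mul, hP.2.1.eq, Matrix.mul_assoc] using this
  have c4 : P * M = M * P := c3.symm.trans c1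
  have hMM : Mᴴ * M = 1 := by
    rw [hM, ← tensorPow_conjTranspose, ← tensorPow_mul, hW, tensorPow_one]
  have : (P * tensorPow d k ρ).trace =
      (P * Matrix.diagonal (fun w : Fin k → Fin d => ∏ j, (r (w j) : ℂ))).trace := by
    rw [hρ, tensorPow_mul, tensorPow_mul, tensorPow_diagonal, tensorPow_conjTranspose, ← hM,
      ← Matrix.mul_assoc, ← Matrix.mul_assoc, c4, Matrix.trace_mul_comm, ← Matrix.mul_assoc,
      ← Matrix.mul_assoc, hMM, Matrix.one_mul]
  rw [this, Matrix.trace]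
  simp only [Matrix.diag_apply, Matrix.mul_diagonal, Complex.re_sum]
  refine Finset.sum_congr rfl fun w _ => ?_
  rw [← Complex.ofReal_prod, Complex.re_mul_ofReal, mul_comm]

lemma IsProj.diag_nonneg {d k : ℕ} {lam : Fin d → Fin (k + 1)}
    {P : Matrix (Fin k → Fin d) (Fin k → Fin d) ℂ} (hP : IsProj lam P) (w : Fin k → Fin d) :
    0 ≤ (P w w).re := by
  have h1 : P w w = ∑ v, P w v * P v w := by
    conv_lhs => rw [← hP.1]
    rw [Matrix.mul_apply]
  rw [h1, Complex.re_sum]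
  refine Finset.sum_nonneg fun v _ => ?_
  have h2 : P v w = star (P w v) := (hP.2.1.apply v w).symm
  rw [h2]
  have : P w v * star (P w v) = (Complex.normSq (P w v) : ℂ) := Complex.mul_conj _
  rw [this, Complex.ofReal_re]
  exact Complex.normSq_nonneg _

/-! ### Independent letters -/

lemma iid {d k : ℕ} (r : Fin d → ℝ) (hr : ∑ x, r x = 1) (S : Finset (Fin k)) (x : Fin d) :
    ∑ w : Fin k → Fin d, (∏ j, r (w j)) * (if ∀ j ∈ S, w j = x then 1 else 0) = r x ^ S.card := by
  have h1 : ∀ w : Fin k → Fin d, (∏ j, r (w j)) * (if ∀ j ∈ S, w j = x then (1 : ℝ) else 0) =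
      ∏ j, (r (w j) * (if j ∈ S → w j = x then 1 else 0)) := by
    intro w
    rw [Finset.prod_mul_distrib]
    congr 1
    rw [Finset.prod_boole]
    simp
  rw [Finset.sum_congr rfl fun w _ => h1 w]
  have h2 := Finset.prod_univ_sum (fun _ : Fin k => (univ : Finset (Fin d)))
    (fun j y => r y * (if j ∈ S → y = x then (1 : ℝ) else 0))
  rw [Fintype.piFinset_univ] at h2
  rw [← h2]
  have h3 : ∀ j : Fin k, ∑ y, r y * (if j ∈ S → y = x then (1 : ℝ) else 0) =
      if j ∈ S then r x else 1 := by
    intro j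
    by_cases hj : j ∈ S
    · simp [hj]
    · simp [hj, hr]
  rw [Finset.prod_congr rfl fun j _ => h3 j, Finset.prod_ite]
  simp

lemma iid_total {d k : ℕ} (r : Fin d → ℝ) (hr : ∑ x, r x = 1) :
    ∑ w : Fin k → Fin d, (∏ j, r (w j)) = 1 := by
  have h2 := Finset.prod_univ_sum (fun _ : Fin k => (univ : Finset (Fin d))) (fun _ y => r y)
  rw [Fintype.piFinset_univ] at h2
  rw [← h2]
  simp [hr]

lemma iid_count {d k : ℕ} (r : Fin d → ℝ) (hr : ∑ x, r x = 1) (i : ℕ) :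
    ∑ w : Fin k → Fin d, (∏ j, r (w j)) * ((univ.filter (fun j => (w j : ℕ) < i)).card : ℝ) =
      k * ∑ x : Fin d, if (x : ℕ) < i then r x else 0 := by
  have h1 : ∀ w : Fin k → Fin d, ((univ.filter (fun j => (w j : ℕ) < i)).card : ℝ) =
      ∑ j : Fin k, ∑ x : Fin d, (if (x : ℕ) < i then 1 else 0) *
        (if ∀ j' ∈ ({j} : Finset (Fin k)), w j' = x then (1 : ℝ) else 0) := by
    intro w
    rw [Finset.card_filter]
    push_cast
    refine Finset.sum_congr rfl fun j _ => ?_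
    simp
  simp only [h1, Finset.mul_sum]
  rw [Finset.sum_comm]
  have h2 : ∀ j : Fin k, ∑ w : Fin k → Fin d, ∑ x : Fin d, (∏ j, r (w j)) *
      ((if (x : ℕ) < i then 1 else 0) *
        (if ∀ j' ∈ ({j} : Finset (Fin k)), w j' = x then (1 : ℝ) else 0)) =
      ∑ x : Fin d, if (x : ℕ) < i then r x else 0 := by
    intro j
    rw [Finset.sum_comm]
    refine Finset.sum_congr rfl fun x _ => ?_
    have := iid r hr {j} x
    split_ifs with hx
    · simp only [one_mul]
      rw [this]; simp
    · simp
  rw [Finset.sum_congr rfl fun j _ => h2 j, Finset.sum_const]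
  simp [Finset.mul_sum]

lemma iid_pairs {d k : ℕ} (r : Fin d → ℝ) (hr : ∑ x, r x = 1) :
    ∑ w : Fin k → Fin d, (∏ j, r (w j)) *
      ((univ.filter (fun p : Fin k × Fin k => w p.1 = w p.2)).card : ℝ) ≤
      k + k ^ 2 * ∑ x : Fin d, r x ^ 2 := by
  have h1 : ∀ w : Fin k → Fin d,
      ((univ.filter (fun p : Fin k × Fin k => w p.1 = w p.2)).card : ℝ) =
      ∑ p : Fin k × Fin k, ∑ x : Fin d,
        (if ∀ j' ∈ ({p.1, p.2} : Finset (Fin k)), w j' = x then (1 : ℝ) else 0) := by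
    intro w
    rw [Finset.card_filter]
    push_cast
    refine Finset.sum_congr rfl fun p _ => ?_
    simp only [Finset.mem_insert, Finset.mem_singleton, forall_eq_or_imp, forall_eq]
    by_cases h : w p.1 = w p.2
    · simp [h]
    · rw [if_neg h]
      symm
      refine Finset.sum_eq_zero fun x _ => if_neg ?_
      rintro ⟨h2, h3⟩
      exact h (h2.trans h3.symm)
  simp only [h1, Finset.mul_sum]
  rw [Finset.sum_comm]
  have h2 : ∀ p : Fin k × Fin k, ∑ w : Fin k → Fin d, ∑ x : Fin d, (∏ j, r (w j)) *
        (if ∀ j' ∈ ({p.1, p.2} : Finset (Fin k)), w j' = x then (1 : ℝ) else 0) ≤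
      (if p.1 = p.2 then 1 else 0) + ∑ x : Fin d, r x ^ 2 := by
    rintro ⟨a, b⟩
    rw [Finset.sum_comm]
    simp only [iid r hr]
    by_cases h : a = b
    · subst h
      have : 0 ≤ ∑ x : Fin d, r x ^ 2 := Finset.sum_nonneg fun x _ => sq_nonneg _
      simpa [hr] using this
    · simp [h, Finset.card_pair h]
  refine (Finset.sum_le_sum fun p _ => h2 p).trans ?_
  rw [Finset.sum_add_distrib, Fintype.sum_prod_type]
  simp [← Finset.mul_sum, sq]

/-! ### Real inequalities -/

lemma abel_nonneg (r a : ℕ → ℝ) (hr : Antitone r) (hr0 : ∀ i, 0 ≤ r i)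
    (ha : ∀ i, 0 ≤ ∑ j ∈ range i, a j) (n : ℕ) : 0 ≤ ∑ j ∈ range n, r j * a j := by
  have key : ∀ n, r n * ∑ j ∈ range (n + 1), a j ≤ ∑ j ∈ range (n + 1), r j * a j := by
    intro n
    induction n with
    | zero => simp
    | succ n ih =>
      rw [Finset.sum_range_succ _ (n + 1), Finset.sum_range_succ (fun j => r j * a j) (n + 1),
        mul_add]
      have := mul_le_mul_of_nonneg_right (hr (Nat.le_succ n)) (ha (n + 1))
      simp only [Nat.succ_eq_add_one] at this
      linarith
  rcases n with _ | n
  · simp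
  · exact (mul_nonneg (hr0 n) (ha (n + 1))).trans (key n)

lemma second_moment {ι : Type*} (F : Finset ι) (Q : ι → ℝ) (hQ1 : ∑ l ∈ F, Q l = 1)
    (L : ι → ℕ → ℝ) (r : ℕ → ℝ) (hr : Antitone r) (hr0 : ∀ i, 0 ≤ r i) (d : ℕ) (k C : ℝ)
    (hk : 0 ≤ k)
    (h1 : ∀ i, k * ∑ j ∈ range i, r j ≤ ∑ l ∈ F, Q l * ∑ j ∈ range i, L l j)
    (h2 : ∑ l ∈ F, Q l * ∑ j ∈ range d, L l j ^ 2 ≤ k ^ 2 * ∑ j ∈ range d, r j ^ 2 + C) :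
    ∑ l ∈ F, Q l * ∑ j ∈ range d, (L l j - k * r j) ^ 2 ≤ C := by
  have hab := abel_nonneg r (fun j => (∑ l ∈ F, Q l * L l j) - k * r j) hr hr0 (by
    intro i
    rw [Finset.sum_sub_distrib, Finset.sum_comm, ← Finset.mul_sum]
    have := h1 i
    simp only [Finset.mul_sum] at this ⊢
    linarith) d
  have e1 : ∑ j ∈ range d, r j * ((∑ l ∈ F, Q l * L l j) - k * r j) =
      ∑ l ∈ F, Q l * ∑ j ∈ range d, r j * L l j - k * ∑ j ∈ range d, r j ^ 2 := by
    simp only [mul_sub, Finset.sum_sub_distrib, Finset.mul_sum]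
    congr 1
    · rw [Finset.sum_comm]
      exact Finset.sum_congr rfl fun l _ => Finset.sum_congr rfl fun j _ => by ring
    · exact Finset.sum_congr rfl fun j _ => by ring
  have e2 : ∑ l ∈ F, Q l * ∑ j ∈ range d, (L l j - k * r j) ^ 2 =
      ∑ l ∈ F, Q l * ∑ j ∈ range d, L l j ^ 2 -
        2 * k * (∑ l ∈ F, Q l * ∑ j ∈ range d, r j * L l j) +
        k ^ 2 * ∑ j ∈ range d, r j ^ 2 := by
    have e3 : ∀ l, ∑ j ∈ range d, (L l j - k * r j) ^ 2 = ∑ j ∈ range d, L l j ^ 2 -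
        2 * k * (∑ j ∈ range d, r j * L l j) + k ^ 2 * ∑ j ∈ range d, r j ^ 2 := by
      intro l
      rw [Finset.mul_sum, Finset.mul_sum, ← Finset.sum_sub_distrib, ← Finset.sum_add_distrib]
      exact Finset.sum_congr rfl fun j _ => by ring
    have e4 : k ^ 2 * ∑ j ∈ range d, r j ^ 2 =
        ∑ l ∈ F, Q l * (k ^ 2 * ∑ j ∈ range d, r j ^ 2) := by
      rw [← Finset.sum_mul, hQ1, one_mul]
    rw [e4, Finset.mul_sum, ← Finset.sum_sub_distrib, ← Finset.sum_add_distrib]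
    refine Finset.sum_congr rfl fun l _ => ?_
    rw [e3]; ring
  rw [e1] at hab
  rw [e2]
  nlinarith [mul_nonneg hk hab]


/-! ### The estimate -/

lemma rep_transSum_diag {d k : ℕ} (w : Fin k → Fin d) :
    rep d k (transSum k) w w =
      ((univ.filter (fun p : Fin k × Fin k => w p.1 = w p.2)).card : ℂ) := by
  rw [transSum, map_sum, Matrix.sum_apply, Finset.card_filter]
  push_cast
  refine Finset.sum_congr rfl fun p _ => ?_
  rw [rep_gel, permMat, Matrix.of_apply]
  refine if_congr ?_ rfl rfl
  rw [Equiv.swap_inv]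
  constructor
  · intro h
    have := congrFun h p.1
    simpa using this
  · intro h
    funext j
    simp only [Function.comp]
    by_cases h1 : j = p.1
    · subst h1; simpa using h
    · by_cases h2 : j = p.2
      · subst h2; simpa using h.symm
      · rw [Equiv.swap_apply_of_ne_of_ne h1 h2]

lemma core {d k : ℕ} (r : Fin d → ℝ) (hra : Antitone r) (hr0 : ∀ i, 0 ≤ r i)
    (hr1 : ∑ x, r x = 1)
    (P : (Fin d → Fin (k + 1)) → Matrix (Fin k → Fin d) (Fin k → Fin d) ℂ)
    (hP : ∀ lam, Valid lam → IsProj lam (P lam)) (F : Finset (Fin d → Fin (k + 1)))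
    (hF : ∀ lam, lam ∈ F ↔ Valid lam) :
    (∑ lam ∈ F, ∑ w : Fin k → Fin d, (∏ j, r (w j)) * (P lam w w).re = 1) ∧
    ∑ lam ∈ F, (∑ w : Fin k → Fin d, (∏ j, r (w j)) * (P lam w w).re) *
      ∑ i : Fin d, (((lam i : ℕ) : ℝ) - k * r i) ^ 2 ≤ k + k * d := by
  have hR : ∀ w : Fin k → Fin d, 0 ≤ ∏ j, r (w j) := fun w =>
    Finset.prod_nonneg fun j _ => hr0 _
  have hsum := sum_proj P hP F hF
  have hp1 : ∀ w : Fin k → Fin d, ∑ lam ∈ F, (P lam w w).re = 1 := by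
    intro w
    have := congrArg (fun M => (M w w).re) hsum
    simpa [Matrix.sum_apply, Complex.re_sum] using this
  have swap : ∀ f : (Fin d → Fin (k + 1)) → ℝ,
      ∑ lam ∈ F, (∑ w : Fin k → Fin d, (∏ j, r (w j)) * (P lam w w).re) * f lam =
      ∑ w : Fin k → Fin d, (∏ j, r (w j)) * ∑ lam ∈ F, (P lam w w).re * f lam := by
    intro f
    simp only [Finset.sum_mul, Finset.mul_sum]
    rw [Finset.sum_comm]
    simp only [mul_assoc]
  have hQ1 : ∑ lam ∈ F, ∑ w : Fin k → Fin d, (∏ j, r (w j)) * (P lam w w).re = 1 := by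
    have := swap (fun _ => 1)
    simp only [mul_one, hp1] at this
    rw [this, iid_total r hr1]
  refine ⟨hQ1, ?_⟩
  set r' : ℕ → ℝ := fun j => if h : j < d then r ⟨j, h⟩ else 0 with hr'
  have hr'0 : ∀ j, 0 ≤ r' j := by
    intro j
    simp only [hr']
    split_ifs
    · exact hr0 _
    · exact le_rfl
  have hr'v : ∀ x : Fin d, r' x = r x := fun x => by simp [hr']
  have hr'a : Antitone r' := by
    intro a b hab
    by_cases hb : b < d
    · have ha : a < d := lt_of_le_of_lt hab hb
      simp only [hr', ha, hb, dif_pos]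
      exact hra hab
    · have : r' b = 0 := by simp [hr', hb]
      rw [this]; exact hr'0 a
  have hpart : ∀ i, ∑ j ∈ range i, r' j = ∑ x : Fin d, if (x : ℕ) < i then r x else 0 := by
    intro i
    have e1 : ∑ x : Fin d, (if (x : ℕ) < i then r x else 0) =
        ∑ j ∈ range d, if j < i then r' j else 0 := by
      rw [← Fin.sum_univ_eq_sum_range (fun j => if j < i then r' j else 0) d]
      simp only [hr'v]
    rw [e1, ← Finset.sum_filter]
    refine (Finset.sum_subset ?_ ?_).symm
    · intro j hj
      simp only [mem_filter, mem_range] at hj ⊢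
      exact hj.2
    · intro j hj hj2
      simp only [mem_filter, mem_range] at hj hj2
      have : ¬ j < d := fun h => hj2 ⟨h, hj⟩
      simp [hr', this]
  have hextz : ∀ (lam : Fin d → Fin (k + 1)) (x : Fin d), extz lam x = (lam x : ℕ) := by
    intro lam x
    simp [extz]
  have h1 : ∀ i, (k : ℝ) * ∑ j ∈ range i, r' j ≤
      ∑ lam ∈ F, (∑ w : Fin k → Fin d, (∏ j, r (w j)) * (P lam w w).re) *
        ∑ j ∈ range i, (extz lam j : ℝ) := by
    intro i
    rw [hpart, ← iid_count r hr1 i, swap]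
    refine Finset.sum_le_sum fun w _ => mul_le_mul_of_nonneg_left ?_ (hR w)
    have : ((univ.filter (fun j => (w j : ℕ) < i)).card : ℝ) =
        ∑ lam ∈ F, (P lam w w).re * ((univ.filter (fun j => (w j : ℕ) < i)).card : ℝ) := by
      rw [← Finset.sum_mul, hp1, one_mul]
    rw [this]
    refine Finset.sum_le_sum fun lam hlam => ?_
    have hv := (hF lam).1 hlam
    by_cases h0 : P lam w w = 0
    · simp [h0]
    · refine mul_le_mul_of_nonneg_left ?_ ((hP lam hv).diag_nonneg w)
      have := (hP lam hv).dom hv h0 i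
      exact_mod_cast this
  have hcas : ∀ w : Fin k → Fin d,
      ∑ lam ∈ F, (P lam w w).re * (∑ j ∈ range d, (extz lam j : ℝ) ^ 2 - k * d) ≤
        ((univ.filter (fun p : Fin k × Fin k => w p.1 = w p.2)).card : ℝ) := by
    intro w
    have e1 : rep d k (transSum k) = ∑ lam ∈ F, rep d k (transSum k) * P lam := by
      rw [← Finset.mul_sum, hsum, mul_one]
    have e2 := congrArg (fun M => (M w w).re) e1
    simp only [rep_transSum_diag, Complex.natCast_re, Matrix.sum_apply, Complex.re_sum] at e2
    rw [e2]
    refine Finset.sum_le_sum fun lam hlam => ?_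
    have hv := (hF lam).1 hlam
    obtain ⟨κ, hκ, hκ2⟩ := casimir hv (hP lam hv)
    rw [hκ2, Matrix.smul_apply, smul_eq_mul, Complex.re_ofReal_mul, mul_comm]
    exact mul_le_mul_of_nonneg_right hκ ((hP lam hv).diag_nonneg w)
  have hsq : ∑ j ∈ range d, r' j ^ 2 = ∑ x : Fin d, r x ^ 2 := by
    rw [← Fin.sum_univ_eq_sum_range (fun j => r' j ^ 2) d]
    simp only [hr'v]
  have h2 : ∑ lam ∈ F, (∑ w : Fin k → Fin d, (∏ j, r (w j)) * (P lam w w).re) *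
        ∑ j ∈ range d, (extz lam j : ℝ) ^ 2 ≤
      (k : ℝ) ^ 2 * ∑ j ∈ range d, r' j ^ 2 + (k + k * d) := by
    have e1 := swap (fun lam => ∑ j ∈ range d, (extz lam j : ℝ) ^ 2 - k * d)
    have e2 : ∑ lam ∈ F, (∑ w : Fin k → Fin d, (∏ j, r (w j)) * (P lam w w).re) *
        (∑ j ∈ range d, (extz lam j : ℝ) ^ 2 - k * d) =
        ∑ lam ∈ F, (∑ w : Fin k → Fin d, (∏ j, r (w j)) * (P lam w w).re) *
        ∑ j ∈ range d, (extz lam j : ℝ) ^ 2 - k * d := by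
      simp only [mul_sub]
      rw [Finset.sum_sub_distrib, ← Finset.sum_mul, hQ1, one_mul]
    have e3 := (Finset.sum_le_sum fun w (_ : w ∈ univ) =>
      mul_le_mul_of_nonneg_left (hcas w) (hR w)).trans (iid_pairs r hr1)
    rw [← e1, e2] at e3
    rw [hsq]
    linarith
  have h3 := second_moment F (fun lam => ∑ w : Fin k → Fin d, (∏ j, r (w j)) * (P lam w w).re)
    hQ1 (fun lam j => (extz lam j : ℝ)) r' hr'a hr'0 d k (k + k * d) (Nat.cast_nonneg k) h1 h2
  refine le_of_eq_of_le (Finset.sum_congr rfl fun lam _ => ?_) h3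
  congr 1
  rw [← Fin.sum_univ_eq_sum_range (fun j => ((extz lam j : ℝ) - k * r' j) ^ 2) d]
  simp only [hr'v, hextz]

lemma chebyshev {ι : Type*} {d : ℕ} (F G : Finset ι) (hGF : G ⊆ F) (Q : ι → ℝ)
    (hQ0 : ∀ l ∈ F, 0 ≤ Q l) (hQ1 : ∑ l ∈ F, Q l = 1) (L : ι → Fin d → ℝ) (r : Fin d → ℝ)
    (k : ℕ) (hk : 0 < k) (ε₁ ε₂ : ℝ) (h1 : 0 < ε₁) (h2 : 0 < ε₂)
    (hG : ∀ l ∈ F, l ∉ G → ε₁ ≤ ∑ i, |L l i / k - r i|)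
    (hM : ∑ l ∈ F, Q l * ∑ i, (L l i - k * r i) ^ 2 ≤ k + k * d)
    (hkk : d * (1 + d) / (ε₁ ^ 2 * ε₂) < k) : ∑ l ∈ G, Q l > 1 - ε₂ := by
  classical
  have hk' : (0 : ℝ) < k := by exact_mod_cast hk
  have hs := Finset.sum_sdiff (f := Q) hGF
  have hbad : ∀ l ∈ F \ G, (k : ℝ) ^ 2 * ε₁ ^ 2 ≤ d * ∑ i, (L l i - k * r i) ^ 2 := by
    intro l hl
    rw [mem_sdiff] at hl
    have a1 := hG l hl.1 hl.2
    have a2 : ∑ i, |L l i - k * r i| = k * ∑ i, |L l i / k - r i| := by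
      rw [Finset.mul_sum]
      refine Finset.sum_congr rfl fun i _ => ?_
      rw [← abs_of_pos hk', ← abs_mul, abs_of_pos hk']
      congr 1
      field_simp
    have a3 := sq_sum_le_card_mul_sum_sq (s := (univ : Finset (Fin d)))
      (f := fun i => |L l i - k * r i|)
    simp only [sq_abs, Finset.card_univ, Fintype.card_fin] at a3
    refine le_trans ?_ a3
    rw [a2, ← mul_pow]
    exact pow_le_pow_left₀ (by positivity) (mul_le_mul_of_nonneg_left a1 hk'.le) 2
  have b1 : (k : ℝ) ^ 2 * ε₁ ^ 2 * ∑ l ∈ F \ G, Q l ≤ d * (k + k * d) := by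
    calc (k : ℝ) ^ 2 * ε₁ ^ 2 * ∑ l ∈ F \ G, Q l
        ≤ ∑ l ∈ F \ G, d * (Q l * ∑ i, (L l i - k * r i) ^ 2) := by
          rw [Finset.mul_sum]
          refine Finset.sum_le_sum fun l hl => ?_
          have := mul_le_mul_of_nonneg_left (hbad l hl) (hQ0 l (mem_sdiff.1 hl).1)
          linarith
      _ ≤ ∑ l ∈ F, d * (Q l * ∑ i, (L l i - k * r i) ^ 2) := by
          refine Finset.sum_le_sum_of_subset_of_nonneg sdiff_subset fun l hl _ => ?_
          have := hQ0 l hl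
          have : 0 ≤ ∑ i, (L l i - k * r i) ^ 2 := Finset.sum_nonneg fun i _ => sq_nonneg _
          positivity
      _ ≤ d * (k + k * d) := by
          rw [← Finset.mul_sum]
          exact mul_le_mul_of_nonneg_left hM (Nat.cast_nonneg d)
  rw [div_lt_iff₀ (by positivity)] at hkk
  have b2 : ∑ l ∈ F \ G, Q l < ε₂ := by
    by_contra hc
    push Not at hc
    have c1 : (k : ℝ) ^ 2 * ε₁ ^ 2 * ε₂ ≤ (k : ℝ) ^ 2 * ε₁ ^ 2 * ∑ l ∈ F \ G, Q l :=
      mul_le_mul_of_nonneg_left hc (by positivity)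
    have c2 := mul_lt_mul_of_pos_left hkk hk'
    nlinarith
  linarith


open scoped Classical

/-- Typical-subspace estimate: if `ρ` is a density operator on `ℂ^d` with spectrum `r` and
`ε₁ > 0`, and `P_X(k)` is the sum of the Schur–Weyl projectors `P_lam` over partitions
`lam ⊢ k` with `Σ_i |lam_i/k − r_i| < ε₁`, then for every `ε₂ > 0` there is `k₀` such that
`tr(P_X(k) ρ^{⊗k}) > 1 − ε₂` for all `k ≥ k₀`. -/
theorem stmt_10 {d : ℕ}
    (ρ : Matrix (Fin d) (Fin d) ℂ) (hρ : ρ.PosSemidef) (hρtr : ρ.trace = 1)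
    (r : Fin d → ℝ) (hr_anti : Antitone r)
    (hr_spec : ∃ σ : Equiv.Perm (Fin d), ∀ i, r i = hρ.1.eigenvalues (σ i))
    (ε₁ : ℝ) (hε₁ : 0 < ε₁)
    (P : (k : ℕ) → (Fin d → Fin (k + 1)) → Matrix (Fin k → Fin d) (Fin k → Fin d) ℂ)
    (hP : ∀ (k : ℕ) (lam : Fin d → Fin (k + 1)),
      Antitone (fun i => (lam i : ℕ)) → (∑ i, (lam i : ℕ)) = k →
        P k lam * P k lam = P k lam ∧ (P k lam).IsHermitian ∧
          LinearMap.range (P k lam).mulVecLin =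
            isotypic d k (fun i => if h : i < d then (lam ⟨i, h⟩ : ℕ) else 0)) :
    ∀ ε₂ : ℝ, 0 < ε₂ → ∃ k₀ : ℕ, ∀ k : ℕ, k₀ ≤ k →
      ((∑ lam ∈ univ.filter (fun lam : Fin d → Fin (k + 1) =>
          Antitone (fun i => (lam i : ℕ)) ∧ (∑ i, (lam i : ℕ)) = k ∧
            (∑ i : Fin d, |(lam i : ℝ) / k - r i|) < ε₁), P k lam) *
        tensorPow d k ρ).trace.re > 1 - ε₂ := by
  intro ε₂ hε₂
  obtain ⟨W, hW, hρW⟩ := exists_diag ρ hρ.1 r hr_spec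
  have hr0 : ∀ i, 0 ≤ r i := by
    obtain ⟨σ, hσ⟩ := hr_spec
    intro i
    rw [hσ]
    exact hρ.eigenvalues_nonneg _
  have hr1 : ∑ i, r i = 1 := by
    rw [hρW, Matrix.mul_assoc, Matrix.trace_mul_comm, Matrix.mul_assoc, hW, Matrix.mul_one,
      Matrix.trace_diagonal] at hρtr
    exact_mod_cast hρtr
  obtain ⟨k₀, hk₀⟩ := exists_nat_gt ((d : ℝ) * (1 + d) / (ε₁ ^ 2 * ε₂))
  refine ⟨k₀ + 1, fun k hk => ?_⟩
  have hP' : ∀ lam, Valid lam → IsProj lam (P k lam) := fun lam hl => hP k lam hl.1 hl.2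
  obtain ⟨hQ1, hM⟩ := core r hr_anti hr0 hr1 (P k) hP' (univ.filter fun lam => Valid lam)
    (fun lam => by simp)
  have hch := chebyshev (univ.filter fun lam : Fin d → Fin (k + 1) => Valid lam)
    (univ.filter (fun lam : Fin d → Fin (k + 1) =>
          Antitone (fun i => (lam i : ℕ)) ∧ (∑ i, (lam i : ℕ)) = k ∧
            (∑ i : Fin d, |(lam i : ℝ) / k - r i|) < ε₁))
    (fun lam hl => by
      simp only [mem_filter, mem_univ, true_and] at hl ⊢
      exact ⟨hl.1, hl.2.1⟩)
    (fun lam => ∑ w : Fin k → Fin d, (∏ j, r (w j)) * (P k lam w w).re)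
    (fun lam hl => by
      simp only [mem_filter, mem_univ, true_and] at hl
      exact Finset.sum_nonneg fun w _ => mul_nonneg (Finset.prod_nonneg fun j _ => hr0 _)
        ((hP' lam hl).diag_nonneg w))
    hQ1 (fun lam i => (lam i : ℝ)) r k (by omega) ε₁ ε₂ hε₁ hε₂
    (fun lam hl hg => by
      simp only [mem_filter, mem_univ, true_and] at hl hg
      by_contra hc
      exact hg ⟨hl.1, hl.2, not_le.1 hc⟩)
    hM (hk₀.trans_le (by exact_mod_cast (by omega : k₀ ≤ k)))
  rw [Finset.sum_mul, Matrix.trace_sum, Complex.re_sum]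
  refine lt_of_lt_of_eq hch (Finset.sum_congr rfl fun lam hl => ?_)
  simp only [mem_filter, mem_univ, true_and] at hl
  exact (trace_proj (hP' lam ⟨hl.1, hl.2.1⟩) ρ W r hW hρW).symm

end
end

section
/- The Araki–Lieb triangle inequality: for any density operator ρ^{AB} on a finite-dimensional bipartite Hilbert space, S(ρ^{AB}) ≥ |S(ρ^A) − S(ρ^B)|. -/
open Matrix ComplexOrder

noncomputable section

/-- The von Neumann entropy of a Hermitian matrix: the Shannon entropy of its eigenvalue
distribution, `S(ρ) = −Σ_i λ_i log λ_i = −tr(ρ log ρ)`. -/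
def vonNeumannEntropy {N : Type*} [Fintype N] [DecidableEq N]
    {M : Matrix N N ℂ} (hM : M.IsHermitian) : ℝ :=
  -∑ i, hM.eigenvalues i * Real.log (hM.eigenvalues i)

/-- entropy via the roots of the characteristic polynomial -/
lemma entropy_roots {N : Type*} [Fintype N] [DecidableEq N]
    {M : Matrix N N ℂ} (hM : M.IsHermitian) :
    vonNeumannEntropy hM = -(M.charpoly.roots.map (fun z => z.re * Real.log z.re)).sum := by
  rw [hM.roots_charpoly_eq_eigenvalues, vonNeumannEntropy, Multiset.map_map]
  rfl

lemma entropy_congr {N K : Type*} [Fintype N] [DecidableEq N] [Fintype K] [DecidableEq K]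
    {M : Matrix N N ℂ} {P : Matrix K K ℂ} (hM : M.IsHermitian) (hP : P.IsHermitian)
    (h : M.charpoly = P.charpoly) : vonNeumannEntropy hM = vonNeumannEntropy hP := by
  rw [entropy_roots, entropy_roots, h]

lemma entropy_mul_comm {N K : Type*} [Fintype N] [DecidableEq N] [Fintype K] [DecidableEq K]
    (A : Matrix N K ℂ) (B : Matrix K N ℂ) (h1 : (A * B).IsHermitian) (h2 : (B * A).IsHermitian) :
    vonNeumannEntropy h1 = vonNeumannEntropy h2 := by
  have h := congrArg (fun p : Polynomial ℂ =>
    (p.roots.map (fun z => z.re * Real.log z.re)).sum) (Matrix.charpoly_mul_comm' A B)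
  rw [Polynomial.roots_mul (mul_ne_zero (pow_ne_zero _ Polynomial.X_ne_zero)
      (Matrix.charpoly_monic _).ne_zero),
    Polynomial.roots_mul (mul_ne_zero (pow_ne_zero _ Polynomial.X_ne_zero)
      (Matrix.charpoly_monic _).ne_zero)] at h
  simp only [Polynomial.roots_X_pow, Multiset.map_add, Multiset.sum_add, Multiset.map_nsmul,
    Multiset.sum_nsmul, Multiset.map_singleton, Multiset.sum_singleton, Complex.zero_re,
    zero_mul, smul_zero, zero_add] at h
  rw [entropy_roots, entropy_roots, h]

/-- the classical core of subadditivity -/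
lemma klein_core {I X Y : Type*} [Fintype I] [Fintype X] [Fintype Y]
    (p : I → ℝ) (q : X → ℝ) (r : Y → ℝ) (W : I → X → Y → ℝ)
    (hp : ∀ i, 0 ≤ p i) (hW : ∀ i j k, 0 ≤ W i j k)
    (hrow : ∀ i, ∑ j, ∑ k, W i j k = 1) (hcol : ∀ j k, ∑ i, W i j k = 1)
    (hq : ∀ j, q j = ∑ k, ∑ i, p i * W i j k)
    (hr : ∀ k, r k = ∑ j, ∑ i, p i * W i j k)
    (h1 : ∑ i, p i = 1) :
    -∑ i, p i * Real.log (p i) ≤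
      -∑ j, q j * Real.log (q j) + -∑ k, r k * Real.log (r k) := by
  have hpw : ∀ i j k, 0 ≤ p i * W i j k := fun i j k => mul_nonneg (hp i) (hW i j k)
  have hq0 : ∀ j, 0 ≤ q j := fun j => by
    rw [hq]; exact Finset.sum_nonneg fun k _ => Finset.sum_nonneg fun i _ => hpw i j k
  have hr0 : ∀ k, 0 ≤ r k := fun k => by
    rw [hr]; exact Finset.sum_nonneg fun j _ => Finset.sum_nonneg fun i _ => hpw i j k
  have hqle : ∀ i j k, p i * W i j k ≤ q j := fun i j k => by
    rw [hq]
    exact (Finset.single_le_sum (f := fun i => p i * W i j k) (fun i _ => hpw i j k)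
      (Finset.mem_univ i)).trans (Finset.single_le_sum (f := fun k => ∑ i, p i * W i j k)
        (fun k _ => Finset.sum_nonneg fun i _ => hpw i j k) (Finset.mem_univ k))
  have hrle : ∀ i j k, p i * W i j k ≤ r k := fun i j k => by
    rw [hr]
    exact (Finset.single_le_sum (f := fun i => p i * W i j k) (fun i _ => hpw i j k)
      (Finset.mem_univ i)).trans (Finset.single_le_sum (f := fun j => ∑ i, p i * W i j k)
        (fun j _ => Finset.sum_nonneg fun i _ => hpw i j k) (Finset.mem_univ j))
  have key : ∀ j k i, p i * W i j k * Real.log (q j) + p i * W i j k * Real.log (r k)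
      - p i * W i j k * Real.log (p i) ≤ q j * r k * W i j k - p i * W i j k := by
    intro j k i
    rcases (hpw i j k).eq_or_lt with h | h
    · rw [← h]
      have := mul_nonneg (mul_nonneg (hq0 j) (hr0 k)) (hW i j k)
      simpa using this
    · have hpi : 0 < p i := (hp i).lt_of_ne (fun e => by rw [← e] at h; simp at h)
      have hqj := h.trans_le (hqle i j k)
      have hrk := h.trans_le (hrle i j k)
      have hl := Real.log_le_sub_one_of_pos (div_pos (mul_pos hqj hrk) hpi)
      rw [Real.log_div (mul_pos hqj hrk).ne' hpi.ne', Real.log_mul hqj.ne' hrk.ne'] at hl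
      have := mul_le_mul_of_nonneg_left hl h.le
      calc _ = p i * W i j k * (Real.log (q j) + Real.log (r k) - Real.log (p i)) := by ring
        _ ≤ _ := this
        _ = _ := by field_simp
  have hsum := Finset.sum_le_sum fun j (_ : j ∈ Finset.univ) =>
    Finset.sum_le_sum fun k (_ : k ∈ Finset.univ) =>
    Finset.sum_le_sum fun i (_ : i ∈ Finset.univ) => key j k i
  simp only [Finset.sum_sub_distrib, Finset.sum_add_distrib] at hsum
  have hP : ∀ g : I → ℝ, ∑ j, ∑ k, ∑ i, p i * W i j k * g i = ∑ i, p i * g i := by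
    intro g
    calc _ = ∑ j, ∑ i, ∑ k, p i * W i j k * g i :=
          Finset.sum_congr rfl fun j _ => Finset.sum_comm
      _ = ∑ i, ∑ j, ∑ k, p i * W i j k * g i := Finset.sum_comm
      _ = ∑ i, p i * g i := by
        refine Finset.sum_congr rfl fun i _ => ?_
        calc _ = ∑ j, ∑ k, (p i * g i) * W i j k := by
              refine Finset.sum_congr rfl fun j _ => Finset.sum_congr rfl fun k _ => by ring
          _ = _ := by simp only [← Finset.mul_sum]; rw [hrow, mul_one]
  have e0 : ∑ j, ∑ k, ∑ i, p i * W i j k = 1 := by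
    have := hP (fun _ => 1)
    simp only [mul_one] at this
    rw [this, h1]
  have e1 : ∑ j, ∑ k, ∑ i, p i * W i j k * Real.log (q j) = ∑ j, q j * Real.log (q j) := by
    refine Finset.sum_congr rfl fun j _ => ?_
    simp only [← Finset.sum_mul]; rw [← hq]
  have e2 : ∑ j, ∑ k, ∑ i, p i * W i j k * Real.log (r k) = ∑ k, r k * Real.log (r k) := by
    rw [Finset.sum_comm]
    refine Finset.sum_congr rfl fun k _ => ?_
    simp only [← Finset.sum_mul]; rw [← hr]
  have e3 : ∑ j, ∑ k, ∑ i, q j * r k * W i j k = 1 := by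
    simp only [← Finset.mul_sum, hcol, mul_one]
    have hr1 : ∑ k, r k = 1 := by
      rw [← e0, Finset.sum_comm]; exact Finset.sum_congr rfl fun k _ => hr k
    have hq1 : ∑ j, q j = 1 := by
      rw [← e0]; exact Finset.sum_congr rfl fun k _ => hq k
    simp [hr1, hq1]
  rw [e1, e2, e3, e0, hP (fun i => Real.log (p i))] at hsum
  linarith

lemma unitary_row {N : Type*} [Fintype N] [DecidableEq N] {Z : Matrix N N ℂ}
    (hZ : Z * Zᴴ = 1) (i : N) : ∑ j, Complex.normSq (Z i j) = 1 := by
  have h := congrFun (congrFun hZ i) i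
  simp only [Matrix.mul_apply, Matrix.conjTranspose_apply, Matrix.one_apply_eq, RCLike.star_def,
    Complex.mul_conj] at h
  exact_mod_cast h

lemma unitary_col {N : Type*} [Fintype N] [DecidableEq N] {Z : Matrix N N ℂ}
    (hZ : Zᴴ * Z = 1) (j : N) : ∑ i, Complex.normSq (Z i j) = 1 := by
  have h := congrFun (congrFun hZ j) j
  simp only [Matrix.mul_apply, Matrix.conjTranspose_apply, Matrix.one_apply_eq, RCLike.star_def,
    mul_comm (starRingEnd ℂ _), Complex.mul_conj] at h
  exact_mod_cast h

lemma diag_conj {N : Type*} [Fintype N] [DecidableEq N] (Z : Matrix N N ℂ) (p : N → ℝ) (x : N) :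
    (Zᴴ * diagonal (fun i => (p i : ℂ)) * Z) x x = ((∑ i, p i * Complex.normSq (Z i x) : ℝ) : ℂ) := by
  rw [Matrix.mul_apply]
  push_cast
  refine Finset.sum_congr rfl fun i _ => ?_
  rw [Matrix.mul_diagonal, Matrix.conjTranspose_apply, ← Complex.mul_conj, RCLike.star_def]
  ring

open scoped Kronecker in
lemma ptrace_left {X Y : Type*} [Fintype X] [DecidableEq X] [Fintype Y] [DecidableEq Y]
    (ρ : Matrix (X × Y) (X × Y) ℂ) (ρX : Matrix X X ℂ)
    (hX : ∀ a a', ρX a a' = ∑ b, ρ (a, b) (a', b))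
    (U : Matrix X X ℂ) (V : Matrix Y Y ℂ) (hV : V * Vᴴ = 1) (j : X) :
    (Uᴴ * ρX * U) j j = ∑ k, ((U ⊗ₖ V)ᴴ * ρ * (U ⊗ₖ V)) (j, k) (j, k) := by
  have hV' : ∀ b b', ∑ k, V b k * star (V b' k) = if b = b' then 1 else 0 := fun b b' => by
    have := congrFun (congrFun hV b) b'
    rwa [Matrix.mul_apply, Matrix.one_apply] at this
  simp only [Matrix.mul_apply, Matrix.conjTranspose_apply, Matrix.kroneckerMap_apply,
    Finset.sum_mul, Fintype.sum_prod_type, hX, Finset.mul_sum]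
  symm
  calc _ = ∑ a', ∑ b', ∑ a, ∑ b, (star (U a j) * ρ (a, b) (a', b') * U a' j) *
        ∑ k, V b' k * star (V b k) := by
        rw [Finset.sum_comm]
        refine Finset.sum_congr rfl fun a' _ => ?_
        rw [Finset.sum_comm]
        refine Finset.sum_congr rfl fun b' _ => ?_
        rw [Finset.sum_comm]
        refine Finset.sum_congr rfl fun a _ => ?_
        rw [Finset.sum_comm]
        refine Finset.sum_congr rfl fun b _ => ?_
        rw [Finset.mul_sum]
        refine Finset.sum_congr rfl fun k _ => ?_
        rw [star_mul']
        ring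
    _ = _ := by
        simp only [hV', mul_ite, mul_one, mul_zero, Finset.sum_ite_eq, Finset.mem_univ, if_true]
        refine Finset.sum_congr rfl fun a' _ => ?_
        rw [Finset.sum_comm]

open scoped Kronecker in
lemma ptrace_right {X Y : Type*} [Fintype X] [DecidableEq X] [Fintype Y] [DecidableEq Y]
    (ρ : Matrix (X × Y) (X × Y) ℂ) (ρY : Matrix Y Y ℂ)
    (hY : ∀ b b', ρY b b' = ∑ a, ρ (a, b) (a, b'))
    (U : Matrix X X ℂ) (V : Matrix Y Y ℂ) (hU : U * Uᴴ = 1) (k : Y) :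
    (Vᴴ * ρY * V) k k = ∑ j, ((U ⊗ₖ V)ᴴ * ρ * (U ⊗ₖ V)) (j, k) (j, k) := by
  rw [ptrace_left (ρ.submatrix Prod.swap Prod.swap) ρY (fun b b' => by simp [hY]) V U hU k]
  refine Finset.sum_congr rfl fun j _ => ?_
  simp only [Matrix.mul_apply, Matrix.conjTranspose_apply, Matrix.kroneckerMap_apply,
    Matrix.submatrix_apply]
  refine Fintype.sum_equiv (Equiv.prodComm _ _) _ _ fun x => ?_
  congr 1
  · refine Fintype.sum_equiv (Equiv.prodComm _ _) _ _ fun y => ?_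
    simp [mul_comm]
  · simp [mul_comm]

lemma eig_conj {N : Type*} [Fintype N] [DecidableEq N] {M : Matrix N N ℂ} (hM : M.IsHermitian) :
    (hM.eigenvectorUnitary : Matrix N N ℂ)ᴴ * M * (hM.eigenvectorUnitary : Matrix N N ℂ) =
      diagonal (fun i => (hM.eigenvalues i : ℂ)) := by
  have := hM.conjStarAlgAut_star_eigenvectorUnitary
  rw [Unitary.conjStarAlgAut_star_apply] at this
  exact this

open scoped Kronecker in
lemma subadditivity {X Y : Type*} [Fintype X] [DecidableEq X] [Fintype Y] [DecidableEq Y]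
    (ρ : Matrix (X × Y) (X × Y) ℂ) (hρ : ρ.PosSemidef) (htr : ρ.trace = 1)
    (ρX : Matrix X X ℂ) (hX : ∀ a a', ρX a a' = ∑ b, ρ (a, b) (a', b)) (hXh : ρX.IsHermitian)
    (ρY : Matrix Y Y ℂ) (hY : ∀ b b', ρY b b' = ∑ a, ρ (a, b) (a, b')) (hYh : ρY.IsHermitian) :
    vonNeumannEntropy hρ.1 ≤ vonNeumannEntropy hXh + vonNeumannEntropy hYh := by
  obtain ⟨E, hE⟩ : ∃ E, E = (hρ.1.eigenvectorUnitary : Matrix (X × Y) (X × Y) ℂ) := ⟨_, rfl⟩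
  obtain ⟨U, hU⟩ : ∃ U, U = (hXh.eigenvectorUnitary : Matrix X X ℂ) := ⟨_, rfl⟩
  obtain ⟨V, hV⟩ : ∃ V, V = (hYh.eigenvectorUnitary : Matrix Y Y ℂ) := ⟨_, rfl⟩
  have dE := eig_conj hρ.1
  have dU := eig_conj hXh
  have dV := eig_conj hYh
  rw [← hE] at dE
  rw [← hU] at dU
  rw [← hV] at dV
  have E1 : E * Eᴴ = 1 := by rw [hE]; exact Unitary.coe_mul_star_self _
  have E2 : Eᴴ * E = 1 := by rw [hE]; exact Unitary.coe_star_mul_self _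
  have U1 : U * Uᴴ = 1 := by rw [hU]; exact Unitary.coe_mul_star_self _
  have U2 : Uᴴ * U = 1 := by rw [hU]; exact Unitary.coe_star_mul_self _
  have V1 : V * Vᴴ = 1 := by rw [hV]; exact Unitary.coe_mul_star_self _
  have V2 : Vᴴ * V = 1 := by rw [hV]; exact Unitary.coe_star_mul_self _
  have T1 : (U ⊗ₖ V) * (U ⊗ₖ V)ᴴ = 1 := by
    rw [Matrix.conjTranspose_kronecker, ← Matrix.mul_kronecker_mul, U1, V1, Matrix.one_kronecker_one]
  have T2 : (U ⊗ₖ V)ᴴ * (U ⊗ₖ V) = 1 := by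
    rw [Matrix.conjTranspose_kronecker, ← Matrix.mul_kronecker_mul, U2, V2, Matrix.one_kronecker_one]
  have pX := ptrace_left ρ ρX hX U V V1
  have pY := ptrace_right ρ ρY hY U V U1
  generalize U ⊗ₖ V = T at T1 T2 pX pY
  obtain ⟨Z, hZ⟩ : ∃ Z, Z = Eᴴ * T := ⟨_, rfl⟩
  have Z1 : Z * Zᴴ = 1 := by
    rw [hZ, Matrix.conjTranspose_mul, Matrix.conjTranspose_conjTranspose]
    calc _ = Eᴴ * (T * Tᴴ) * E := by simp only [Matrix.mul_assoc]
      _ = 1 := by rw [T1, Matrix.mul_one, E2]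
  have Z2 : Zᴴ * Z = 1 := by
    rw [hZ, Matrix.conjTranspose_mul, Matrix.conjTranspose_conjTranspose]
    calc _ = Tᴴ * (E * Eᴴ) * T := by simp only [Matrix.mul_assoc]
      _ = 1 := by rw [E1, Matrix.mul_one, T2]
  have hTρ : Tᴴ * ρ * T = Zᴴ * diagonal (fun i => (hρ.1.eigenvalues i : ℂ)) * Z := by
    rw [← dE, hZ, Matrix.conjTranspose_mul, Matrix.conjTranspose_conjTranspose]
    calc _ = Tᴴ * 1 * ρ * 1 * T := by simp only [Matrix.mul_one]
      _ = _ := by rw [← E1]; simp only [Matrix.mul_assoc]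
  refine klein_core (hρ.1.eigenvalues) hXh.eigenvalues hYh.eigenvalues
    (fun i j k => Complex.normSq (Z i (j, k))) (fun i => hρ.eigenvalues_nonneg i)
    (fun i j k => Complex.normSq_nonneg _) ?_ ?_ ?_ ?_ ?_
  · intro i
    rw [← unitary_row Z1 i, Fintype.sum_prod_type]
  · intro j k
    exact unitary_col Z2 (j, k)
  · intro j
    have h := pX j
    rw [dU, Matrix.diagonal_apply_eq, hTρ] at h
    simp only [diag_conj] at h
    exact_mod_cast h
  · intro k
    have h := pY k
    rw [dV, Matrix.diagonal_apply_eq, hTρ] at h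
    simp only [diag_conj] at h
    exact_mod_cast h
  · have h := hρ.1.trace_eq_sum_eigenvalues
    rw [htr] at h
    apply Complex.ofReal_injective
    push_cast
    exact h.symm

open scoped MatrixOrder in
lemma araki_lieb_half {A B : Type*} [Fintype A] [DecidableEq A] [Fintype B] [DecidableEq B]
    (ρ : Matrix (A × B) (A × B) ℂ) (hρ : ρ.PosSemidef) (htr : ρ.trace = 1)
    (ρA : Matrix A A ℂ) (hA : ∀ a a', ρA a a' = ∑ b, ρ (a, b) (a', b)) (hAh : ρA.IsHermitian)
    (ρB : Matrix B B ℂ) (hB : ∀ b b', ρB b b' = ∑ a, ρ (a, b) (a, b')) (hBh : ρB.IsHermitian) :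
    vonNeumannEntropy hAh ≤ vonNeumannEntropy hBh + vonNeumannEntropy hρ.1 := by
  obtain ⟨M, hM⟩ : ∃ M : Matrix (A × B) (A × B) ℂ, ρ = M * Mᴴ := by
    obtain ⟨Q, hQ⟩ := CStarAlgebra.nonneg_iff_eq_star_mul_self.mp hρ.nonneg
    rw [Matrix.star_eq_conjTranspose] at hQ
    exact ⟨Qᴴ, by rw [hQ, Matrix.conjTranspose_conjTranspose]⟩
  let N : Matrix A (B × (A × B)) ℂ := Matrix.of fun a x => M (a, x.1) x.2
  have hN : ρA = N * Nᴴ := by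
    ext a a'
    rw [hA, hM]
    simp only [Matrix.mul_apply, Matrix.conjTranspose_apply, N, Matrix.of_apply,
      Fintype.sum_prod_type (α₁ := B)]
  have hσ : (Nᴴ * N).PosSemidef := Matrix.posSemidef_conjTranspose_mul_self N
  have hMM : (Mᴴ * M).IsHermitian := (Matrix.posSemidef_conjTranspose_mul_self M).1
  have hBT : ρBᵀ.IsHermitian := hBh.transpose
  have trA : ρA.trace = 1 := by
    rw [← htr]
    simp only [Matrix.trace, Matrix.diag_apply, hA, Fintype.sum_prod_type]
  have s1 : vonNeumannEntropy hAh = vonNeumannEntropy hσ.1 := by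
    subst hN
    exact entropy_mul_comm N Nᴴ hAh hσ.1
  have s2 : vonNeumannEntropy hρ.1 = vonNeumannEntropy hMM := by
    subst hM
    exact entropy_mul_comm M Mᴴ hρ.1 hMM
  have s3 : vonNeumannEntropy hBh = vonNeumannEntropy hBT :=
    entropy_congr _ _ (Matrix.charpoly_transpose _).symm
  rw [s1, s2, s3]
  refine subadditivity (Nᴴ * N) hσ ?_ ρBᵀ ?_ hBT (Mᴴ * M) ?_ hMM
  · rw [Matrix.trace_mul_comm, ← hN, trA]
  · intro b b'
    rw [Matrix.transpose_apply, hB, hM]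
    simp only [Matrix.mul_apply, Matrix.conjTranspose_apply, N, Matrix.of_apply]
    rw [Finset.sum_comm]
    refine Finset.sum_congr rfl fun c _ => Finset.sum_congr rfl fun a _ => mul_comm _ _
  · intro c c'
    simp only [Matrix.mul_apply, Matrix.conjTranspose_apply, N, Matrix.of_apply]
    rw [Fintype.sum_prod_type, Finset.sum_comm]

/-- Araki–Lieb triangle inequality: for any density operator `ρ^{AB}` on a
(finite-dimensional) bipartite system with marginals `ρ^A` and `ρ^B`,
`S(ρ^{AB}) ≥ |S(ρ^A) − S(ρ^B)|`. -/
theorem stmt_16 {m n : ℕ}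
    (ρ : Matrix (Fin m × Fin n) (Fin m × Fin n) ℂ)
    (hρ : ρ.PosSemidef) (hρtr : ρ.trace = 1)
    (ρA : Matrix (Fin m) (Fin m) ℂ)
    (hρA : ∀ a a', ρA a a' = ∑ b, ρ (a, b) (a', b)) (hρAh : ρA.IsHermitian)
    (ρB : Matrix (Fin n) (Fin n) ℂ)
    (hρB : ∀ b b', ρB b b' = ∑ a, ρ (a, b) (a, b')) (hρBh : ρB.IsHermitian) :
    vonNeumannEntropy hρ.1 ≥ |vonNeumannEntropy hρAh - vonNeumannEntropy hρBh| := by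
  have hs : (ρ.submatrix Prod.swap Prod.swap).PosSemidef := hρ.submatrix _
  have h1 := araki_lieb_half ρ hρ hρtr ρA hρA hρAh ρB hρB hρBh
  have h2 := araki_lieb_half (ρ.submatrix Prod.swap Prod.swap) hs
    (by
      rw [← hρtr]
      exact Fintype.sum_equiv (Equiv.prodComm _ _) _ _ fun x => rfl)
    ρB (fun b b' => by simp [hρB]) hρBh ρA (fun a a' => by simp [hρA]) hρAh
  have h3 : vonNeumannEntropy hs.1 = vonNeumannEntropy hρ.1 :=
    entropy_congr _ _ (Matrix.charpoly_reindex (Equiv.prodComm _ _) ρ)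
  rw [ge_iff_le, abs_le]
  constructor <;> linarith

end
end
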